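/- arXiv:math/0203180 — 3 statements merged into one kernel-verified Lean document; each statement's English description precedes it below -/
import Mathlib

section
/- Let t ≥ 2 and let p_1, …, p_t ∈ k be algebraically independent over the prime subfield of k. Let A be the k-subalgebra of End_k(k[Y,Y⁻¹]) generated by the Eulerian derivatives D_{p_1}, …, D_{p_t}. Then A is noetherian but not strongly noetherian: there exists a commutative noetherian k-algebra B such that the tensor product A ⊗_k B is not a left noetherian ring. -/
set_option synthInstance.maxHeartbeats 1000000
set_option maxHeartbeats 4000000
set_option maxSynthPendingDepth 3

noncomputable section

universe u

open MvPolynomial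

section HomogeneousInterpolation

variable {k σ : Type*} [Field k] [Fintype σ]

lemma exists_eq_sum_mul_X {n : ℕ} {f : MvPolynomial σ k} (hf : f.IsHomogeneous (n + 1)) :
    ∃ h : σ → MvPolynomial σ k, (∀ i, (h i).IsHomogeneous n) ∧ f = ∑ i, h i * X i := by
  have hmem : f ∈ homogeneousSubmodule σ k n * homogeneousSubmodule σ k 1 := by
    rw [← homogeneousSubmodule_one_pow (R := k) (σ := σ) n, ← pow_succ,
      homogeneousSubmodule_one_pow]
    exact hf
  induction hmem using Submodule.mul_induction_on' with
  | mem_mul_mem m hm x hx =>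
    rw [homogeneousSubmodule_one_eq_span_X, Submodule.mem_span_range_iff_exists_fun] at hx
    obtain ⟨c, rfl⟩ := hx
    refine ⟨fun i => C (c i) * m, fun i => IsHomogeneous.C_mul hm _, ?_⟩
    rw [Finset.mul_sum]
    refine Finset.sum_congr rfl fun i _ => ?_
    rw [smul_eq_C_mul]
    ring
  | add x hx y hy hx' hy' =>
    have hle : homogeneousSubmodule σ k n * homogeneousSubmodule σ k 1
        ≤ homogeneousSubmodule σ k (n + 1) := homogeneousSubmodule_mul n 1
    obtain ⟨h₁, h₁h, h₁e⟩ := hx' (hle hx)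
    obtain ⟨h₂, h₂h, h₂e⟩ := hy' (hle hy)
    refine ⟨h₁ + h₂, fun i => (h₁h i).add (h₂h i), ?_⟩
    rw [h₁e, h₂e, ← Finset.sum_add_distrib]
    exact Finset.sum_congr rfl fun i _ => by rw [Pi.add_apply, add_mul]

omit [Fintype σ] in
lemma isHomogeneous_X_sub_C_mul_X (i o : σ) (c : k) :
    (X i - C c * X o : MvPolynomial σ k).IsHomogeneous 1 :=
  (isHomogeneous_X k i).sub (isHomogeneous_C_mul_X c o)

lemma exists_eq_sum_mul_sub_add (o : σ) (d : σ → k) (n : ℕ)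
    (f : MvPolynomial σ k) (hf : f.IsHomogeneous (n + 1)) :
    ∃ g : σ → MvPolynomial σ k, (∀ i, (g i).IsHomogeneous n) ∧
      f = ∑ i, g i * (X i - C (d i) * X o) + C (eval d f) * X o ^ (n + 1) := by
  induction n generalizing f with
  | zero =>
    obtain ⟨h, hh, rfl⟩ := exists_eq_sum_mul_X hf
    refine ⟨h, hh, ?_⟩
    have hc : ∀ i, h i = C (eval d (h i)) := fun i => by
      have : h i ∈ homogeneousSubmodule σ k 0 := hh i
      rw [homogeneousSubmodule_zero] at this
      obtain ⟨c, hc⟩ := this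
      rw [← hc]
      simp [smul_eq_C_mul]
    simp only [mul_sub, Finset.sum_sub_distrib, map_sum, Finset.sum_mul, map_mul, eval_X, zero_add,
      pow_one]
    rw [eq_comm, sub_add_eq_add_sub, sub_eq_iff_eq_add]
    congr 1
    refine Finset.sum_congr rfl fun i _ => ?_
    rw [← hc i]
    ring
  | succ n ih =>
    obtain ⟨h, hh, rfl⟩ := exists_eq_sum_mul_X hf
    obtain ⟨g, hg, hge⟩ := ih (∑ i, C (d i) * h i)
      (IsHomogeneous.sum _ _ _ fun i _ => IsHomogeneous.C_mul (hh i) _)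
    refine ⟨fun i => h i + g i * X o, fun i => (hh i).add ((hg i).mul (isHomogeneous_X k o)), ?_⟩
    have he : eval d (∑ i, h i * X i) = eval d (∑ i, C (d i) * h i) := by
      simp only [map_sum, map_mul, eval_X, eval_C, mul_comm]
    rw [he]
    have h1 : ∑ i, (h i + g i * X o) * (X i - C (d i) * X o)
        = ∑ i, h i * X i - (∑ i, C (d i) * h i) * X o
          + (∑ i, g i * (X i - C (d i) * X o)) * X o := by
      rw [Finset.sum_mul, Finset.sum_mul, ← Finset.sum_sub_distrib, ← Finset.sum_add_distrib]
      exact Finset.sum_congr rfl fun i _ => by ring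
    rw [h1]
    linear_combination (-(X o : MvPolynomial σ k)) * (-hge)

omit [Fintype σ] in
lemma exists_homogeneous_interpolation {o e : σ} {d : ℕ → σ → k} (ho : ∀ j, d j o = 1)
    (he : Function.Injective fun j => d j e) (T : Finset ℕ) {j : ℕ} (hj : j ∈ T) {n : ℕ}
    (hn : T.card ≤ n + 1) :
    ∃ L : MvPolynomial σ k, L.IsHomogeneous n ∧ eval (d j) L = 1 ∧
      ∀ j' ∈ T, j' ≠ j → eval (d j') L = 0 := by
  classical
  refine ⟨C (∏ i ∈ T.erase j, (d j e - d i e))⁻¹ *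
    (X o ^ (n - (T.erase j).card) * ∏ i ∈ T.erase j, (X e - C (d i e) * X o)), ?_, ?_, ?_⟩
  · refine IsHomogeneous.C_mul ?_ _
    have h1 := IsHomogeneous.prod (T.erase j)
      (fun i => (X e - C (d i e) * X o : MvPolynomial σ k)) (fun _ => 1)
      (fun i _ => isHomogeneous_X_sub_C_mul_X e o _)
    have h2 := (isHomogeneous_X_pow (R := k) o (n - (T.erase j).card)).mul h1
    have h3 := Finset.card_erase_of_mem hj
    convert h2 using 1
    simp only [Finset.sum_const, smul_eq_mul, mul_one]
    omega
  · simp only [map_mul, eval_C, map_pow, eval_X, ho, one_pow, one_mul, map_prod, map_sub, mul_one]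
    refine inv_mul_cancel₀ (Finset.prod_ne_zero_iff.mpr fun i hi => sub_ne_zero.mpr fun h => ?_)
    exact (Finset.mem_erase.mp hi).1 (he h).symm
  · intro j' hj' hne
    simp only [map_mul, eval_C, map_pow, eval_X, ho, one_pow, one_mul, map_prod, map_sub, mul_one]
    exact mul_eq_zero_of_right _
      (Finset.prod_eq_zero (Finset.mem_erase.mpr ⟨hne, hj'⟩) (sub_self (d j' e)))

omit [Fintype σ] in
lemma exists_homogeneous_koszul_correction {κ : Type*} [Fintype κ] {o e : σ} {d : ℕ → σ → k}
    (ho : ∀ j, d j o = 1) (he : Function.Injective fun j => d j e) (T : Finset ℕ) (m : ℕ)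
    (b : κ → ℕ) (g f : κ → MvPolynomial σ k) (hg : ∀ i, (g i).IsHomogeneous (b i))
    (hf : ∀ i, (f i).IsHomogeneous (m - b i)) (hgT : ∀ j ∈ T, ∃ i, eval (d j) (g i) ≠ 0)
    (hfg : ∀ j ∈ T, eval (d j) (∑ i, f i * g i) = 0)
    (hsize : ∀ i i', b i + b i' + T.card ≤ m + 1) :
    ∃ f' : κ → MvPolynomial σ k, (∀ i, (f' i).IsHomogeneous (m - b i)) ∧
      (∀ i, ∀ j ∈ T, eval (d j) (f' i) = 0) ∧ ∑ i, f' i * g i = ∑ i, f i * g i := by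
  classical
  rcases T.eq_empty_or_nonempty with rfl | hT
  · exact ⟨f, hf, by simp, rfl⟩
  have hT1 : 1 ≤ T.card := hT.card_pos
  have : Nonempty κ := by
    obtain ⟨j, hj⟩ := hT
    exact ⟨(hgT j hj).choose⟩
  choose! i₀ hi₀ using hgT
  have hL : ∀ j ∈ T, ∀ n, T.card ≤ n + 1 → ∃ L : MvPolynomial σ k, L.IsHomogeneous n ∧
      eval (d j) L = 1 ∧ ∀ j' ∈ T, j' ≠ j → eval (d j') L = 0 := fun j hj n hn =>
    exists_homogeneous_interpolation ho he T hj hn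
  choose! L hLh hL1 hL0 using hL
  let ε : ℕ → κ → k := fun j i => if i = i₀ j then (eval (d j) (g (i₀ j)))⁻¹ else 0
  have hε : ∀ j ∈ T, ∑ i, ε j i * eval (d j) (g i) = 1 := fun j hj => by
    simp [ε, hi₀ j hj]
  let a : ℕ → κ → κ → k := fun j i i' => eval (d j) (f i) * ε j i' - ε j i * eval (d j) (f i')
  let A : κ → κ → MvPolynomial σ k := fun i i' =>
    ∑ j ∈ T, C (a j i i') * L j (m - b i - b i')
  have hAeval : ∀ j ∈ T, ∀ i i', eval (d j) (A i i') = a j i i' := fun j hj i i' => by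
    have hn : T.card ≤ m - b i - b i' + 1 := by have := hsize i i'; omega
    simp only [A, map_sum, map_mul, eval_C]
    rw [Finset.sum_eq_single_of_mem j hj fun j' hj' hne => by
      rw [hL0 j' hj' _ hn j hj hne.symm, mul_zero], hL1 j hj _ hn, mul_one]
  refine ⟨fun i => f i - ∑ i', A i i' * g i', fun i => ?_, fun i j hj => ?_, ?_⟩
  · refine (hf i).sub (IsHomogeneous.sum _ _ _ fun i' _ => ?_)
    have hs := hsize i i'
    have h1 : (A i i').IsHomogeneous (m - b i - b i') :=
      IsHomogeneous.sum _ _ _ fun j hj => IsHomogeneous.C_mul (hLh j hj _ (by omega)) _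
    have h2 := h1.mul (hg i')
    rwa [show m - b i - b i' + b i' = m - b i by omega] at h2
  · have h0 := hfg j hj
    simp only [map_sum, map_mul] at h0
    simp only [map_sub, map_sum, map_mul, hAeval j hj, a, sub_mul, Finset.sum_sub_distrib, mul_assoc]
    rw [← Finset.mul_sum, ← Finset.mul_sum, hε j hj, h0]
    ring
  · have hu : ∑ i, (∑ i', A i i' * g i') * g i = 0 := by
      have h1 : ∀ i i', A i i' = ∑ j ∈ T, C (eval (d j) (f i) * ε j i') * L j (m - b i - b i')
          - ∑ j ∈ T, C (eval (d j) (f i') * ε j i) * L j (m - b i' - b i) := fun i i' => by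
        rw [← Finset.sum_sub_distrib]
        refine Finset.sum_congr rfl fun j _ => ?_
        rw [Nat.sub_right_comm m (b i') (b i), ← sub_mul, ← C_sub, mul_comm _ (ε j i)]
      simp only [h1, sub_mul, Finset.sum_sub_distrib, Finset.sum_mul]
      rw [sub_eq_zero]
      conv_rhs => rw [Finset.sum_comm]
      refine Finset.sum_congr rfl fun i _ => Finset.sum_congr rfl fun i' _ =>
        Finset.sum_congr rfl fun j _ => by ring
    simp only [sub_mul, Finset.sum_sub_distrib, hu, sub_zero]

end HomogeneousInterpolation

section PointSystem

variable {k σ : Type*} [Field k]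

/-- A sequence of spaces of forms of degree `m` vanishing at the first `m` points of `d`, such that
multiplication by linear forms vanishing at the point `d m` maps the `m`-th space to the next. -/
structure IsPointSystem (d : ℕ → σ → k) (o : σ) (M : ℕ → Submodule k (MvPolynomial σ k)) :
    Prop where
  isHomogeneous : ∀ m, ∀ F ∈ M m, F.IsHomogeneous m
  eval_eq_zero : ∀ m, ∀ F ∈ M m, ∀ j < m, eval (d j) F = 0
  mul_mem : ∀ m, ∀ F ∈ M m, ∀ i, (X i - C (d m i) * X o) * F ∈ M (m + 1)

lemma IsPointSystem.mul_mem_of_eval_eq_zero [Fintype σ] {d : ℕ → σ → k} {o e : σ}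
    {M : ℕ → Submodule k (MvPolynomial σ k)} (hM : IsPointSystem d o M) (ho : ∀ j, d j o = 1)
    (he : Function.Injective fun j => d j e) {b : ℕ} {F : MvPolynomial σ k} (hF : F ∈ M b) (a : ℕ)
    (f : MvPolynomial σ k) (hf : f.IsHomogeneous a)
    (hfd : ∀ j ∈ Finset.Ico b (b + a), eval (d j) f = 0) : f * F ∈ M (b + a) := by
  induction a generalizing f with
  | zero =>
    have : f ∈ homogeneousSubmodule σ k 0 := hf
    rw [homogeneousSubmodule_zero] at this
    obtain ⟨c, rfl⟩ := this
    simpa using (M b).smul_mem c hF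
  | succ a ih =>
    obtain ⟨g, hg, hge⟩ := exists_eq_sum_mul_sub_add o (d (b + a)) a f hf
    rw [hfd (b + a) (by simp), C_0, zero_mul, add_zero] at hge
    obtain ⟨g', hg', hg'0, hg'e⟩ := exists_homogeneous_koszul_correction ho he
      (Finset.Ico b (b + a)) (a + 1) (fun _ => 1)
      (fun i => X i - C (d (b + a) i) * X o) g (fun i => isHomogeneous_X_sub_C_mul_X i o _) hg
      (fun j hj => ⟨e, by
        simp only [map_sub, eval_X, map_mul, eval_C, ho, mul_one]
        exact sub_ne_zero.mpr fun h => by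
          have h1 := he h
          have h2 := (Finset.mem_Ico.mp hj).2
          omega⟩)
      (fun j hj => by
        rw [← hge]
        exact hfd j (by simp only [Finset.mem_Ico] at hj ⊢; omega))
      (fun _ _ => by simp; omega)
    rw [hge, ← hg'e, Finset.sum_mul]
    refine Submodule.sum_mem _ fun i _ => ?_
    rw [mul_comm (g' i), mul_assoc]
    exact hM.mul_mem _ _ (ih (g' i) (hg' i) (hg'0 i)) i

lemma exists_forall_eq_of_monotone_of_bounded (ρ : ℕ → ℕ → ℕ) (h₁ : ∀ m, Monotone fun n => ρ n m)
    (h₂ : ∀ n, Monotone (ρ n)) (D : ℕ) (hD : ∀ n m, ρ n m ≤ D) :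
    ∃ n₀ m₀, ∀ n ≥ n₀, ∀ m ≥ m₀, ρ n m = ρ n₀ m := by
  have hb : BddAbove (Set.range fun x : ℕ × ℕ => ρ x.1 x.2) :=
    ⟨D, by rintro _ ⟨x, rfl⟩; exact hD _ _⟩
  obtain ⟨⟨n₀, m₀⟩, hx⟩ := Nat.sSup_mem (Set.range_nonempty _) hb
  refine ⟨n₀, m₀, fun n hn m hm => le_antisymm ?_ (h₁ m hn)⟩
  calc ρ n m ≤ ρ n₀ m₀ := by
        dsimp only at hx
        rw [hx]
        exact le_csSup hb ⟨(n, m), rfl⟩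
    _ ≤ ρ n₀ m := h₂ n₀ hm

lemma homogeneousComponent_mul_of_isHomogeneous {R : Type*} [CommSemiring R]
    (f : MvPolynomial σ R) {g : MvPolynomial σ R} {b : ℕ} (hg : g.IsHomogeneous b) (a : ℕ) :
    homogeneousComponent (a + b) (f * g) = homogeneousComponent a f * g := by
  conv_lhs => rw [← sum_homogeneousComponent f, Finset.sum_mul, map_sum]
  have h1 : ∀ i, homogeneousComponent (a + b) (homogeneousComponent i f * g)
      = if a = i then homogeneousComponent i f * g else 0 := fun i => by
    rw [homogeneousComponent_of_mem ((homogeneousComponent_isHomogeneous i f).mul hg)]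
    simp only [Nat.add_right_cancel_iff]
  simp only [h1]
  rw [Finset.sum_ite_eq]
  split_ifs with h
  · rfl
  · rw [homogeneousComponent_eq_zero, zero_mul]
    simpa using h

lemma homogeneousComponent_mul_of_isHomogeneous_of_lt {R : Type*} [CommSemiring R]
    (f : MvPolynomial σ R) {g : MvPolynomial σ R} {b : ℕ} (hg : g.IsHomogeneous b) {m : ℕ}
    (hm : m < b) : homogeneousComponent m (f * g) = 0 := by
  conv_lhs => rw [← sum_homogeneousComponent f, Finset.sum_mul, map_sum]
  refine Finset.sum_eq_zero fun i _ => ?_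
  rw [homogeneousComponent_of_mem ((homogeneousComponent_isHomogeneous i f).mul hg),
    if_neg (by omega)]

lemma exists_eq_sum_mul_of_mem_span {κ : Type*} [Fintype κ] (g : κ → MvPolynomial σ k) (b : κ → ℕ)
    (hg : ∀ i, (g i).IsHomogeneous (b i)) {m : ℕ} (hb : ∀ i, b i ≤ m) {F : MvPolynomial σ k}
    (hF : F.IsHomogeneous m) (hFg : F ∈ Ideal.span (Set.range g)) :
    ∃ f : κ → MvPolynomial σ k, (∀ i, (f i).IsHomogeneous (m - b i)) ∧ ∑ i, f i * g i = F := by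
  rw [Ideal.span, Submodule.mem_span_range_iff_exists_fun] at hFg
  obtain ⟨f, hf⟩ := hFg
  refine ⟨fun i => homogeneousComponent (m - b i) (f i),
    fun i => homogeneousComponent_isHomogeneous _ _, ?_⟩
  rw [← homogeneousComponent_eq_self hF, ← hf, map_sum]
  refine Finset.sum_congr rfl fun i _ => ?_
  rw [smul_eq_mul, ← homogeneousComponent_mul_of_isHomogeneous (f i) (hg i),
    Nat.sub_add_cancel (hb i)]

theorem exists_forall_le_of_isPointSystem [Fintype σ] {d : ℕ → σ → k} {o e : σ}
    (ho : ∀ j, d j o = 1) (he : Function.Injective fun j => d j e)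
    (hd : ∀ F : MvPolynomial σ k, F ≠ 0 → ∀ m, F.IsHomogeneous m → {j | eval (d j) F = 0}.Finite)
    (N : ℕ → ℕ → Submodule k (MvPolynomial σ k)) (hN : ∀ n, IsPointSystem d o (N n))
    (hmono : ∀ m, Monotone fun n => N n m) : ∃ n₀, ∀ n ≥ n₀, ∀ m, N n m ≤ N n₀ m := by
  classical
  let G₀ : Set (MvPolynomial σ k) := {F | F ≠ 0 ∧ ∃ n b, F ∈ N n b}
  obtain ⟨G, hGsub, hGspan⟩ := (Submodule.fg_span_iff_fg_span_finset_subset G₀).mp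
    ((isNoetherianRing_iff_ideal_fg (MvPolynomial σ k)).mp inferInstance (Ideal.span G₀))
  rcases G₀.eq_empty_or_nonempty with hG₀ | hG₀
  · refine ⟨0, fun n _ m F hF => ?_⟩
    by_cases hF0 : F = 0
    · exact hF0 ▸ zero_mem _
    · exact absurd (show F ∈ G₀ from ⟨hF0, n, m, hF⟩) (hG₀ ▸ Set.notMem_empty F)
  have hmem : ∀ {n m F}, F ∈ N n m → F ∈ Ideal.span (Set.range ((↑) : G → MvPolynomial σ k)) := by
    intro n m F hF
    rw [Subtype.range_coe]
    by_cases hF0 : F = 0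
    · exact hF0 ▸ zero_mem _
    · exact (congrArg (F ∈ ·) hGspan).mp (Submodule.subset_span (⟨hF0, n, m, hF⟩ : F ∈ G₀))
  have hGne : Nonempty G := by
    by_contra hcon
    obtain ⟨F, hF0, n, m, hF⟩ := hG₀
    have := hmem hF
    rw [not_nonempty_iff] at hcon
    rw [Set.range_eq_empty, Ideal.span_empty] at this
    exact hF0 this
  choose ν b hνb using fun g : G => (hGsub g.2).2
  have hgh : ∀ g : G, (g : MvPolynomial σ k).IsHomogeneous (b g) := fun g =>
    (hN _).isHomogeneous _ _ (hνb g)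
  obtain ⟨n₁, hn₁⟩ : ∃ n₁, ∀ n ≥ n₁, ∀ g : G, (g : MvPolynomial σ k) ∈ N n (b g) :=
    ⟨Finset.univ.sup ν, fun n hn g =>
      hmono _ ((Finset.le_sup (f := ν) (Finset.mem_univ g)).trans hn) (hνb g)⟩
  obtain ⟨m₁, hm₁, hm₁b⟩ : ∃ m₁, (∀ j ≥ m₁, ∀ g : G, eval (d j) (g : MvPolynomial σ k) ≠ 0) ∧
      ∀ g g' : G, b g + b g' ≤ m₁ := by
    have hfin : (⋃ g : G, {j | eval (d j) (g : MvPolynomial σ k) = 0}).Finite :=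
      Set.finite_iUnion fun g => hd _ (hGsub g.2).1 _ (hgh g)
    obtain ⟨c, hc⟩ := hfin.bddAbove
    refine ⟨c + 1 + 2 * Finset.univ.sup b, fun j hj g hg0 => ?_, fun g g' => ?_⟩
    · have := hc (Set.mem_iUnion.mpr ⟨g, hg0⟩)
      omega
    · have h1 := Finset.le_sup (f := b) (Finset.mem_univ g)
      have h2 := Finset.le_sup (f := b) (Finset.mem_univ g')
      omega
  have hbm : ∀ g : G, b g ≤ m₁ := fun g => (Nat.le_add_right _ _).trans (hm₁b g g)
  let W : ℕ → ℕ → Submodule k (G → MvPolynomial σ k) := fun n m =>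
    { carrier := {f | (∀ g, (f g).IsHomogeneous (m - b g)) ∧
        (∀ g, ∀ j ∈ Finset.Ico m₁ m, eval (d j) (f g) = 0) ∧ ∑ g, f g * (g : MvPolynomial σ k) ∈ N n m}
      add_mem' := fun {f f'} hf hf' => ⟨fun g => (hf.1 g).add (hf'.1 g), fun g j hj => by
          rw [Pi.add_apply, map_add, hf.2.1 g j hj, hf'.2.1 g j hj, add_zero], by
          simp only [Pi.add_apply, add_mul, Finset.sum_add_distrib]
          exact add_mem hf.2.2 hf'.2.2⟩
      zero_mem' := ⟨fun g => isHomogeneous_zero _ _ _, fun g j hj => by simp, by simp⟩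
      smul_mem' := fun c f hf => ⟨fun g => by
          rw [Pi.smul_apply, smul_eq_C_mul]
          exact IsHomogeneous.C_mul (hf.1 g) c, fun g j hj => by
          rw [Pi.smul_apply, smul_eval, hf.2.1 g j hj, mul_zero], by
          simp only [Pi.smul_apply, smul_mul_assoc, ← Finset.smul_sum]
          exact Submodule.smul_mem _ _ hf.2.2⟩ }
  let ev : (G → MvPolynomial σ k) →ₗ[k] (G × Fin m₁ → k) :=
    LinearMap.pi fun x => (aeval (d x.2)).toLinearMap ∘ₗ LinearMap.proj x.1
  have hev : ∀ f x, ev f x = eval (d x.2) (f x.1) := fun f x => by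
    simp [ev]
  let Q : ℕ → ℕ → Submodule k (G × Fin m₁ → k) := fun n m => (W n m).map ev
  have hQmono : ∀ m, Monotone fun n => Q n m := fun m n n' hnn' =>
    Submodule.map_mono fun f hf => ⟨hf.1, hf.2.1, hmono m hnn' hf.2.2⟩
  have hQN : ∀ n n' m, n₁ ≤ n → m₁ ≤ m → Q n' m ≤ Q n m → N n' m ≤ N n m := by
    intro n n' m hn hm hQ F hF
    obtain ⟨f, hf, hfe⟩ := exists_eq_sum_mul_of_mem_span (fun g : G => (g : MvPolynomial σ k)) b hgh
      (fun g => (hbm g).trans hm) ((hN n').isHomogeneous _ _ hF) (hmem hF)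
    obtain ⟨f', hf', hf'0, hf'e⟩ := exists_homogeneous_koszul_correction ho he (Finset.Ico m₁ m) m b
      (fun g : G => (g : MvPolynomial σ k)) f hgh hf
      (fun j hj => ⟨hGne.some, hm₁ j (Finset.mem_Ico.mp hj).1 _⟩)
      (fun j hj => by
        rw [hfe]
        exact (hN n').eval_eq_zero _ _ hF j (Finset.mem_Ico.mp hj).2)
      (fun g g' => by
        have := hm₁b g g'
        rw [Nat.card_Ico]
        omega)
    rw [hfe] at hf'e
    obtain ⟨f'', hf'', hev''⟩ := hQ (Submodule.mem_map_of_mem (f := ev)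
      (show f' ∈ W n' m from ⟨hf', hf'0, hf'e.symm ▸ hF⟩))
    have hdiff : ∀ g : G, (f' g - f'' g) * (g : MvPolynomial σ k) ∈ N n m := fun g => by
      have := (hN n).mul_mem_of_eval_eq_zero ho he (hn₁ n hn g) (m - b g) (f' g - f'' g)
        ((hf' g).sub (hf''.1 g)) (fun j hj => by
          rw [map_sub, sub_eq_zero]
          rcases lt_or_ge j m₁ with hj1 | hj1
          · have := congrFun hev'' (g, ⟨j, hj1⟩)
            rw [hev, hev] at this
            exact this.symm
          · have hj2 : j ∈ Finset.Ico m₁ m := by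
              have := hbm g
              simp only [Finset.mem_Ico] at hj ⊢
              omega
            rw [hf'0 g j hj2, hf''.2.1 g j hj2])
      rwa [Nat.add_sub_cancel' ((hbm g).trans hm)] at this
    have hsum : F = ∑ g, (f' g - f'' g) * (g : MvPolynomial σ k)
        + ∑ g, f'' g * (g : MvPolynomial σ k) := by
      rw [← hf'e, ← Finset.sum_add_distrib]
      exact Finset.sum_congr rfl fun g _ => by ring
    rw [hsum]
    exact add_mem (Submodule.sum_mem _ fun g _ => hdiff g) hf''.2.2
  have hrank : ∀ n m, m₁ ≤ m → Module.finrank k (Q n m) ≤ Module.finrank k (Q n (m + 1)) := by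
    intro n m hm
    let v : MvPolynomial σ k := X e - C (d m e) * X o
    let φ : (G × Fin m₁ → k) →ₗ[k] (G × Fin m₁ → k) :=
      LinearMap.pi fun x => (eval (d x.2) v) • LinearMap.proj x
    have hv : ∀ x : G × Fin m₁, eval (d x.2) v ≠ 0 := fun x => by
      simp only [v, map_sub, eval_X, map_mul, eval_C, ho, mul_one]
      exact sub_ne_zero.mpr fun h => by
        have h1 := he h
        have := x.2.2
        omega
    have hφ : Function.Injective φ := fun y z hyz => by
      funext x
      have := congrFun hyz x
      exact mul_left_cancel₀ (hv x) this
    have hle : (Q n m).map φ ≤ Q n (m + 1) := by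
      rintro _ ⟨_, ⟨f, hf, rfl⟩, rfl⟩
      refine ⟨fun g => v * f g, ⟨fun g => ?_, fun g j hj => ?_, ?_⟩, ?_⟩
      · have h1 := (isHomogeneous_X_sub_C_mul_X e o (d m e)).mul (hf.1 g)
        have h2 := hbm g
        rwa [show 1 + (m - b g) = m + 1 - b g by omega] at h1
      · rw [map_mul]
        rcases (Nat.lt_succ_iff.mp (Finset.mem_Ico.mp hj).2).lt_or_eq with h | h
        · rw [hf.2.1 g j (Finset.mem_Ico.mpr ⟨(Finset.mem_Ico.mp hj).1, h⟩), mul_zero]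
        · subst h
          simp [v, ho]
      · simp only [mul_assoc, ← Finset.mul_sum]
        exact (hN n).mul_mem m _ hf.2.2 e
      · funext x
        rw [hev, map_mul]
        change _ = eval (d x.2) v * ev f x
        rw [hev]
    calc Module.finrank k (Q n m) = Module.finrank k ((Q n m).map φ) :=
          LinearEquiv.finrank_eq (Submodule.equivMapOfInjective φ hφ _)
      _ ≤ _ := Submodule.finrank_mono hle
  obtain ⟨n₂, m₂, hst⟩ := exists_forall_eq_of_monotone_of_bounded
    (fun n m => Module.finrank k (Q (n₁ + n) (m₁ + m)))
    (fun m n n' h => Submodule.finrank_mono (hQmono _ (by omega)))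
    (fun n => monotone_nat_of_le_succ fun m => hrank _ _ (by omega)) _
    (fun n m => Submodule.finrank_le _)
  have hlow : ∀ m, ∃ c, ∀ n ≥ c, N n m ≤ N c m := fun m => by
    have hfg : IsNoetherian k (homogeneousSubmodule σ k m) :=
      isNoetherian_of_fg_of_noetherian _ (homogeneousSubmodule_fg (σ := σ) (R := k) m)
    obtain ⟨c, hc⟩ := monotone_stabilizes_iff_noetherian.mpr hfg
      ⟨fun n => (N n m).submoduleOf (homogeneousSubmodule σ k m), fun n n' h =>
        Submodule.comap_mono (hmono m h)⟩
    refine ⟨c, fun n hn F hF => ?_⟩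
    have h1 : (⟨F, (hN n).isHomogeneous _ _ hF⟩ : homogeneousSubmodule σ k m)
        ∈ (N n m).submoduleOf (homogeneousSubmodule σ k m) := hF
    have h2 := hc n hn
    exact (congrArg (_ ∈ ·) h2).mpr h1
  choose c hc using hlow
  refine ⟨n₁ + n₂ + (Finset.range (m₁ + m₂)).sup c, fun n hn m => ?_⟩
  rcases lt_or_ge m (m₁ + m₂) with hm | hm
  · have h1 : c m ≤ (Finset.range (m₁ + m₂)).sup c := Finset.le_sup (f := c) (Finset.mem_range.mpr hm)
    exact (hc m n (by omega)).trans (hmono m (by omega))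
  · refine le_trans (hQN (n₁ + n₂) n m (by omega) (by omega) (le_of_eq ?_)) (hmono m (by omega))
    have h1 := hst (n - n₁) (by omega) (m - m₁) (by omega)
    rw [show n₁ + (n - n₁) = n by omega, show m₁ + (m - m₁) = m by omega] at h1
    exact (Submodule.eq_of_le_of_finrank_eq (hQmono m (by omega)) h1.symm).symm

end PointSystem

section TopForms

variable {k σ A : Type*} [Field k] [Ring A] [Algebra k A]

/-- The forms of degree `m` that occur as top components of elements of the left ideal `J`. -/
def topForms (Ψ : A →ₗ[k] MvPolynomial σ k) (J : Submodule A A) (m : ℕ) :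
    Submodule k (MvPolynomial σ k) :=
  (J.restrictScalars k ⊓ ⨅ m' : Set.Ioi m, LinearMap.ker (homogeneousComponent m'.1 ∘ₗ Ψ)).map
    (homogeneousComponent m ∘ₗ Ψ)

lemma mem_topForms {Ψ : A →ₗ[k] MvPolynomial σ k} {J : Submodule A A} {m : ℕ}
    {F : MvPolynomial σ k} : F ∈ topForms Ψ J m ↔ ∃ a ∈ J,
      (∀ m' > m, homogeneousComponent m' (Ψ a) = 0) ∧ homogeneousComponent m (Ψ a) = F := by
  simp [topForms, and_assoc]

lemma topForms_mono (Ψ : A →ₗ[k] MvPolynomial σ k) (m : ℕ) :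
    Monotone fun J : Submodule A A => topForms Ψ J m := fun J J' h F hF => by
  simp only [mem_topForms] at hF ⊢
  obtain ⟨a, ha, h'⟩ := hF
  exact ⟨a, h ha, h'⟩

lemma le_of_topForms_le {Ψ : A →ₗ[k] MvPolynomial σ k} (hΨ : Function.Injective Ψ)
    {J J' : Submodule A A} (hJ : J ≤ J') (h : ∀ m, topForms Ψ J' m ≤ topForms Ψ J m) :
    J' ≤ J := by
  have key : ∀ M, ∀ a ∈ J', (∀ m ≥ M, homogeneousComponent m (Ψ a) = 0) → a ∈ J := by
    intro M
    induction M with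
    | zero =>
      intro a _ ha
      have h0 : Ψ a = 0 := by
        rw [← sum_homogeneousComponent (Ψ a)]
        exact Finset.sum_eq_zero fun i _ => ha i (Nat.zero_le i)
      rw [hΨ (h0.trans (map_zero Ψ).symm)]
      exact zero_mem J
    | succ M ih =>
      intro a ha hM
      obtain ⟨a', ha', h1, h2⟩ := mem_topForms.mp (h M (mem_topForms.mpr ⟨a, ha, hM, rfl⟩))
      have h3 : a - a' ∈ J := ih _ (sub_mem ha (hJ ha')) fun m hm => by
        rcases hm.lt_or_eq with hm | rfl
        · rw [map_sub, map_sub, hM m hm, h1 m hm, sub_zero]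
        · rw [map_sub, map_sub, h2, sub_self]
      simpa using add_mem h3 ha'
  exact fun a ha => key ((Ψ a).totalDegree + 1) a ha fun m hm => homogeneousComponent_eq_zero _ _ hm

theorem isNoetherianRing_of_isPointSystem [Fintype σ] {d : ℕ → σ → k} {o e : σ}
    (ho : ∀ j, d j o = 1) (he : Function.Injective fun j => d j e)
    (hd : ∀ F : MvPolynomial σ k, F ≠ 0 → ∀ m, F.IsHomogeneous m → {j | eval (d j) F = 0}.Finite)
    (Ψ : A →ₗ[k] MvPolynomial σ k) (hΨ : Function.Injective Ψ) (x : σ → A) (c : σ → ℕ → k)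
    (hc : ∀ i m, c i m ≠ 0)
    (hx : ∀ i a m, homogeneousComponent (m + 1) (Ψ (x i * a))
      = C (c i m) * (X i - C (d m i) * X o) * homogeneousComponent m (Ψ a))
    (hvan : ∀ a m, ∀ j < m, eval (d j) (homogeneousComponent m (Ψ a)) = 0) :
    IsNoetherianRing A := by
  refine monotone_stabilizes_iff_noetherian.mp fun J => ?_
  obtain ⟨n₀, hn₀⟩ := exists_forall_le_of_isPointSystem ho he hd (fun n m => topForms Ψ (J n) m)
    (fun n => by
      refine ⟨fun m F hF => ?_, fun m F hF j hj => ?_, fun m F hF i => ?_⟩ <;>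
        obtain ⟨a, ha, h1, rfl⟩ := mem_topForms.mp hF
      · exact homogeneousComponent_isHomogeneous _ _
      · exact hvan a m j hj
      · refine mem_topForms.mpr ⟨(c i m)⁻¹ • (x i * a), ?_, fun m' hm' => ?_, ?_⟩
        · exact Submodule.smul_of_tower_mem _ _ (Submodule.smul_mem _ (x i) ha)
        · obtain ⟨m', rfl⟩ : ∃ l, m' = l + 1 := ⟨m' - 1, by omega⟩
          rw [map_smul, map_smul, hx, h1 m' (by omega), mul_zero, smul_zero]
        · rw [map_smul, map_smul, hx, smul_eq_C_mul, mul_assoc, ← mul_assoc, ← C_mul,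
            inv_mul_cancel₀ (hc i m), C_1, one_mul])
    (fun m n n' h => topForms_mono Ψ m (J.monotone h))
  exact ⟨n₀, fun n hn => le_antisymm (J.monotone hn)
    (le_of_topForms_le hΨ (J.monotone hn) (hn₀ n hn))⟩

end TopForms

section GenericPoints

lemma sum_ne_zero_of_injOn_degree {R σ ι : Type*} [CommRing R] (m : MonomialOrder σ) {S : Finset ι}
    (hS : S.Nonempty) {f : ι → MvPolynomial σ R} (hf : ∀ i ∈ S, f i ≠ 0)
    (hinj : Set.InjOn (fun i => m.degree (f i)) S) : ∑ i ∈ S, f i ≠ 0 := by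
  classical
  obtain ⟨i, hi, hmax⟩ := S.exists_max_image (fun i => m.toSyn (m.degree (f i))) hS
  intro h0
  have h1 : coeff (m.degree (f i)) (∑ i ∈ S, f i) = coeff (m.degree (f i)) (f i) := by
    rw [coeff_sum]
    refine Finset.sum_eq_single_of_mem i hi fun j hj hne => m.coeff_eq_zero_of_lt ?_
    exact lt_of_le_of_ne (hmax j hj) fun h => hne (hinj hj hi (m.toSyn.injective h))
  rw [h0, coeff_zero] at h1
  exact m.coeff_degree_ne_zero_iff.mpr (hf i hi) h1.symm

lemma finite_setOf_sum_mul_monomial_eq_zero {R ι : Type*} [CommRing R] [IsDomain R] {t : ℕ}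
    (S : Finset ι) (e : ι → Fin t →₀ ℕ) (he : Set.InjOn e S) (c : ι → MvPolynomial (Fin t) R)
    (hc : ∃ i ∈ S, c i ≠ 0) :
    {n : ℕ | ∑ i ∈ S, c i * monomial (n • e i) 1 = 0}.Finite := by
  classical
  let m : MonomialOrder (Fin t) := MonomialOrder.lex
  let S' := S.filter fun i => c i ≠ 0
  have hS' : S'.Nonempty := by
    obtain ⟨i, hi, hci⟩ := hc
    exact ⟨i, Finset.mem_filter.mpr ⟨hi, hci⟩⟩
  have hbad : (⋃ x ∈ (S ×ˢ S).filter fun x => x.1 ≠ x.2,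
      {n : ℕ | m.degree (c x.1) + n • e x.1 = m.degree (c x.2) + n • e x.2}).Finite := by
    refine Set.Finite.biUnion (Finset.finite_toSet _) fun x hx => Set.Subsingleton.finite ?_
    intro n hn n' hn'
    obtain ⟨hx₁, hx₂⟩ := Finset.mem_filter.mp hx
    obtain ⟨hx₃, hx₄⟩ := Finset.mem_product.mp hx₁
    obtain ⟨s, hs⟩ := DFunLike.ne_iff.mp fun h => hx₂ (he hx₃ hx₄ h)
    have h1 : m.degree (c x.1) s + n * e x.1 s = m.degree (c x.2) s + n * e x.2 s :=
      DFunLike.congr_fun hn s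
    have h2 : m.degree (c x.1) s + n' * e x.1 s = m.degree (c x.2) s + n' * e x.2 s :=
      DFunLike.congr_fun hn' s
    have hs' : (e x.1 s : ℤ) ≠ e x.2 s := by exact_mod_cast hs
    zify at h1 h2 ⊢
    have h3 : ((n : ℤ) - n') * ((e x.1 s : ℤ) - e x.2 s) = 0 := by linear_combination h1 - h2
    rcases mul_eq_zero.mp h3 with h | h
    · exact sub_eq_zero.mp h
    · exact absurd (sub_eq_zero.mp h) hs'
  refine hbad.subset fun n hn => ?_
  by_contra hnot
  have hsum : ∑ i ∈ S, c i * monomial (n • e i) 1 = ∑ i ∈ S', c i * monomial (n • e i) 1 := by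
    exact (Finset.sum_filter_of_ne fun i _ h => left_ne_zero_of_mul h).symm
  have hne : ∀ i, (monomial (n • e i) (1 : R)) ≠ 0 := fun i => by simp
  have hdeg : ∀ i ∈ S', m.degree (c i * monomial (n • e i) 1) = m.degree (c i) + n • e i :=
    fun i hi => by
      rw [m.degree_mul (Finset.mem_filter.mp hi).2 (hne i), m.degree_monomial, if_neg one_ne_zero]
  refine sum_ne_zero_of_injOn_degree m hS'
    (fun i hi => mul_ne_zero (Finset.mem_filter.mp hi).2 (hne i)) (fun i hi j hj hij => ?_)
    (hsum.symm.trans hn)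
  by_contra hne'
  simp only [hdeg i hi, hdeg j hj] at hij
  refine hnot (Set.mem_biUnion (x := (i, j)) ?_ hij)
  simp [(Finset.mem_filter.mp hi).1, (Finset.mem_filter.mp hj).1, hne']

lemma finite_setOf_sum_mul_aeval_monomial_eq_zero {F k ι : Type*} [Field F] [Field k] [Algebra F k]
    {t : ℕ} {p : Fin t → k} (hp : AlgebraicIndependent F p) (S : Finset ι) (e : ι → Fin t →₀ ℕ)
    (he : Set.InjOn e S) (c : ι → k) (hc : ∃ i ∈ S, c i ≠ 0) :
    {n : ℕ | ∑ i ∈ S, c i * aeval p (monomial (n • e i) (1 : F)) = 0}.Finite := by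
  let A := MvPolynomial (Fin t) F
  let _ : Algebra A k := (aeval p : A →ₐ[F] k).toRingHom.toAlgebra
  have hA : ∀ a : A, algebraMap A k a = aeval p a := fun _ => rfl
  have : FaithfulSMul A k := (faithfulSMul_iff_algebraMap_injective A k).mpr hp
  let _ : Algebra (FractionRing A) k := FractionRing.liftAlgebra A k
  have : IsScalarTower A (FractionRing A) k := FractionRing.isScalarTower_liftAlgebra A k
  obtain ⟨i₀, hi₀, hci₀⟩ := hc
  obtain ⟨φ, hφ⟩ : ∃ φ : Module.Dual (FractionRing A) k, φ (c i₀) ≠ 0 := by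
    by_contra! h
    exact hci₀ ((Module.forall_dual_apply_eq_zero_iff (FractionRing A) (c i₀)).mp h)
  obtain ⟨b, hb⟩ := IsLocalization.exist_integer_multiples (nonZeroDivisors A) S fun i => φ (c i)
  choose! C hC using hb
  refine (finite_setOf_sum_mul_monomial_eq_zero S e he C ⟨i₀, hi₀, fun h => ?_⟩).subset
    fun n hn => ?_
  · have h1 := hC i₀ hi₀
    rw [h, map_zero, eq_comm, Algebra.smul_def, mul_eq_zero] at h1
    rcases h1 with h1 | h1
    · exact nonZeroDivisors.coe_ne_zero b
        ((IsFractionRing.injective A (FractionRing A)) (h1.trans (map_zero _).symm))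
    · exact hφ h1
  · apply IsFractionRing.injective A (FractionRing A)
    have h1 := congrArg (fun y => (b : A) • φ y) hn
    simp only [map_sum, map_zero, smul_zero, Finset.smul_sum] at h1
    rw [map_zero, ← h1, map_sum]
    refine Finset.sum_congr rfl fun i hi => ?_
    have h2 : c i * aeval p (monomial (n • e i) (1 : F))
        = (algebraMap A (FractionRing A) (monomial (n • e i) 1)) • c i := by
      rw [algebraMap_smul, Algebra.smul_def, hA, mul_comm]
    rw [h2, map_smul, map_mul, hC i hi, smul_eq_mul, Algebra.smul_def, Algebra.smul_def]
    ring

/-- The orbit of the point `(1 : ⋯ : 1)` under the automorphism scaling the coordinates by `p`. -/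
def orbitPoint {k σ : Type*} [Field k] (p : σ → k) (n : ℤ) : σ → k := fun i => p i ^ n

/-- Extension of a tuple of affine coordinates to homogeneous coordinates. -/
def consOne {k τ : Type*} [One k] (p : τ → k) : Option τ → k := fun i => i.elim 1 p

lemma degree_eq_of_mem_support {k σ : Type*} [CommSemiring k] {m : ℕ} {F : MvPolynomial σ k}
    (hF : F.IsHomogeneous m) {a : σ →₀ ℕ} (ha : a ∈ F.support) : a.degree = m := by
  by_contra h
  exact mem_support_iff.mp ha (hF.coeff_eq_zero h)

lemma injOn_some_support {k : Type*} [Field k] {t m : ℕ} {F : MvPolynomial (Option (Fin t)) k}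
    (hF : F.IsHomogeneous m) : Set.InjOn Finsupp.some (F.support : Set (Option (Fin t) →₀ ℕ)) := by
  intro a ha b hb hab
  have hs : ∀ i, a (some i) = b (some i) := fun i => DFunLike.congr_fun hab i
  have hdeg : ∀ c ∈ F.support, c none + ∑ i, c (some i) = m := fun c hc => by
    rw [← Fintype.sum_option, ← Finsupp.degree_eq_sum]
    exact degree_eq_of_mem_support hF hc
  have h1 := hdeg a ha
  have h2 := hdeg b hb
  simp only [hs] at h1
  ext i
  cases i with
  | none => omega
  | some i => exact hs i

theorem finite_setOf_eval_orbitPoint_natCast {F₀ k : Type*} [Field F₀] [Field k] [Algebra F₀ k]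
    {t : ℕ} {p : Fin t → k} (hp : AlgebraicIndependent F₀ p) {m : ℕ}
    {F : MvPolynomial (Option (Fin t)) k} (hF0 : F ≠ 0) (hF : F.IsHomogeneous m) :
    {n : ℕ | eval (orbitPoint (consOne p) n) F = 0}.Finite := by
  obtain ⟨a₀, ha₀⟩ := support_nonempty.mpr hF0
  refine (finite_setOf_sum_mul_aeval_monomial_eq_zero hp F.support Finsupp.some
    (injOn_some_support hF) (fun a => coeff a F) ⟨a₀, ha₀, mem_support_iff.mp ha₀⟩).subset
    fun n hn => ?_
  simp only [Set.mem_ofPred_eq] at hn ⊢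
  rw [← hn, eval_eq']
  refine Finset.sum_congr rfl fun a _ => ?_
  congr 1
  rw [aeval_monomial, map_one, one_mul, Fintype.prod_option, Finsupp.prod_fintype _ _ (by simp)]
  simp [orbitPoint, consOne, pow_mul]

theorem finite_setOf_eval_orbitPoint_neg {F₀ k : Type*} [Field F₀] [Field k] [Algebra F₀ k]
    {t : ℕ} {p : Fin t → k} (hp : AlgebraicIndependent F₀ p) {m : ℕ}
    {F : MvPolynomial (Option (Fin t)) k} (hF0 : F ≠ 0) (hF : F.IsHomogeneous m) :
    {n : ℕ | eval (orbitPoint (consOne p) (-(n : ℤ))) F = 0}.Finite := by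
  obtain ⟨a₀, ha₀⟩ := support_nonempty.mpr hF0
  have hle : ∀ a ∈ F.support, ∀ i, a (some i) ≤ m := fun a ha i =>
    (Finsupp.le_degree _ a).trans_eq (degree_eq_of_mem_support hF ha)
  let e : (Option (Fin t) →₀ ℕ) → Fin t →₀ ℕ := fun a =>
    Finsupp.equivFunOnFinite.symm fun i => m - a (some i)
  refine (finite_setOf_sum_mul_aeval_monomial_eq_zero hp F.support e
    (fun a ha b hb hab => injOn_some_support hF ha hb (Finsupp.ext fun i => ?_))
    (fun a => coeff a F) ⟨a₀, ha₀, mem_support_iff.mp ha₀⟩).subset fun n hn => ?_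
  · have h1 := DFunLike.congr_fun hab i
    have h2 := hle a ha i
    have h3 := hle b hb i
    simp only [e, Finsupp.equivFunOnFinite_symm_apply_apply] at h1
    simp only [Finsupp.some_apply]
    omega
  simp only [Set.mem_ofPred_eq] at hn ⊢
  have hp0 : ∀ i, p i ≠ 0 := fun i => hp.ne_zero i
  rw [← mul_zero (∏ i, p i ^ (n * m)), ← hn, eval_eq', Finset.mul_sum]
  refine Finset.sum_congr rfl fun a ha => ?_
  rw [mul_left_comm]
  congr 1
  rw [aeval_monomial, map_one, one_mul, Fintype.prod_option, Finsupp.prod_fintype _ _ (by simp)]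
  simp only [orbitPoint, consOne, Option.elim, one_zpow, one_pow, one_mul, e,
    ← Finset.prod_mul_distrib, Finsupp.smul_apply, Finsupp.equivFunOnFinite_symm_apply_apply]
  refine Finset.prod_congr rfl fun i _ => ?_
  rw [smul_eq_mul, ← zpow_natCast, ← zpow_natCast, ← zpow_natCast, ← zpow_mul, ← zpow_add₀ (hp0 i)]
  congr 1
  push_cast [hle a ha i]
  ring

end GenericPoints
section TwistedMultiplication

/-- Rescaling of the variables of a polynomial ring. -/
def scaleVars {R σ : Type*} [CommSemiring R] (u : σ → R) : MvPolynomial σ R →ₐ[R] MvPolynomial σ R :=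
  aeval fun i => C (u i) * X i

section ScaleVars

variable {R S σ : Type*} [CommSemiring R] [CommSemiring S]

@[simp]
lemma scaleVars_X (u : σ → R) (i : σ) : scaleVars u (X i) = C (u i) * X i := aeval_X _ i

lemma eval_scaleVars (u x : σ → R) (f : MvPolynomial σ R) :
    eval x (scaleVars u f) = eval (u * x) f := by
  induction f using MvPolynomial.induction_on with
  | C r => simp
  | add f g hf hg => simp [hf, hg]
  | mul_X f i hf => simp [hf]

lemma map_scaleVars (g : R →+* S) (u : σ → R) (f : MvPolynomial σ R) :
    map g (scaleVars u f) = scaleVars (g ∘ u) (map g f) := by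
  induction f using MvPolynomial.induction_on with
  | C r => simp
  | add f g hf hg => simp [hf, hg]
  | mul_X f i hf => simp [hf]

lemma isHomogeneous_scaleVars (u : σ → R) {f : MvPolynomial σ R} {m : ℕ} (hf : f.IsHomogeneous m) :
    (scaleVars u f).IsHomogeneous m := by
  have h := hf.aeval (φ := f) (g := fun i => C (u i) * X i) (n := 1) fun i => by
    simpa using (isHomogeneous_C σ (u i)).mul (isHomogeneous_X R i)
  rwa [one_mul] at h

lemma homogeneousComponent_scaleVars (u : σ → R) (f : MvPolynomial σ R) (m : ℕ) :
    homogeneousComponent m (scaleVars u f) = scaleVars u (homogeneousComponent m f) := by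
  conv_lhs => rw [← sum_homogeneousComponent f]
  simp only [map_sum]
  have h : ∀ a, homogeneousComponent m (scaleVars u (homogeneousComponent a f))
      = if m = a then scaleVars u (homogeneousComponent a f) else 0 := fun a =>
    homogeneousComponent_of_mem
      (isHomogeneous_scaleVars u (homogeneousComponent_isHomogeneous a f))
  rw [Finset.sum_congr rfl fun a _ => h a, Finset.sum_ite_eq]
  split_ifs with hm
  · rfl
  · rw [homogeneousComponent_eq_zero _ _ (by simpa using hm), map_zero]

lemma map_homogeneousComponent (g : R →+* S) (f : MvPolynomial σ R) (m : ℕ) :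
    map g (homogeneousComponent m f) = homogeneousComponent m (map g f) := by
  ext a
  simp only [coeff_map, coeff_homogeneousComponent]
  split_ifs <;> simp

/-- Multiplication of polynomials in which the left factor is rescaled by `u b` against the
component of degree `b` of the right factor. -/
def twistedMul (u : ℕ → σ → R) (f g : MvPolynomial σ R) : MvPolynomial σ R :=
  ∑ b ∈ Finset.range (g.totalDegree + 1), scaleVars (u b) f * homogeneousComponent b g

lemma homogeneousComponent_twistedMul (u : ℕ → σ → R) (f g : MvPolynomial σ R) (m : ℕ) :
    homogeneousComponent m (twistedMul u f g) = ∑ x ∈ Finset.HasAntidiagonal.antidiagonal m,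
      scaleVars (u x.2) (homogeneousComponent x.1 f) * homogeneousComponent x.2 g := by
  rw [twistedMul, map_sum, ← Finset.Nat.sum_antidiagonal_swap,
    Finset.Nat.sum_antidiagonal_eq_sum_range_succ_mk]
  simp only [Prod.fst_swap, Prod.snd_swap]
  have h : ∀ b, homogeneousComponent m (scaleVars (u b) f * homogeneousComponent b g)
      = if b ≤ m then scaleVars (u b) (homogeneousComponent (m - b) f) * homogeneousComponent b g
        else 0 := fun b => by
    split_ifs with hb
    · obtain ⟨a, rfl⟩ := Nat.exists_eq_add_of_le' hb
      rw [homogeneousComponent_mul_of_isHomogeneous _ (homogeneousComponent_isHomogeneous b g),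
        homogeneousComponent_scaleVars, Nat.add_sub_cancel]
    · exact homogeneousComponent_mul_of_isHomogeneous_of_lt _
        (homogeneousComponent_isHomogeneous b g) (not_le.mp hb)
  rw [Finset.sum_congr rfl fun b _ => h b, ← Finset.sum_filter]
  refine Finset.sum_subset (fun b hb => ?_) fun b hb hb' => ?_
  · simp only [Finset.mem_filter, Finset.mem_range] at hb ⊢
    omega
  · simp only [Finset.mem_filter, Finset.mem_range] at hb hb'
    rw [homogeneousComponent_eq_zero b g (by omega), mul_zero]

end ScaleVars

section Action

variable {k σ : Type*} [Field k]

/-- The action of polynomials on Laurent polynomials in which a homogeneous `F` of degree `m`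
sends `T n` to `F (p ^ n) • T (n - m)`. -/
def orbitAction (p : σ → k) : MvPolynomial σ k →ₗ[k] Module.End k (LaurentPolynomial k) :=
  (basisMonomials σ k).constr k fun a => (AddMonoidAlgebra.basis ℤ k).constr k fun n =>
    eval (orbitPoint p n) (monomial a 1) • LaurentPolynomial.T (n - a.degree)

lemma laurentPolynomial_end_ext {f g : Module.End k (LaurentPolynomial k)}
    (h : ∀ n, f (LaurentPolynomial.T n) = g (LaurentPolynomial.T n)) : f = g :=
  (AddMonoidAlgebra.basis ℤ k).ext h

lemma orbitAction_monomial_one (p : σ → k) (a : σ →₀ ℕ) (n : ℤ) :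
    orbitAction p (monomial a 1) (LaurentPolynomial.T n)
      = eval (orbitPoint p n) (monomial a 1) • LaurentPolynomial.T (n - a.degree) := by
  have h1 : orbitAction p (monomial a 1) = (AddMonoidAlgebra.basis ℤ k).constr k fun n =>
      eval (orbitPoint p n) (monomial a 1) • LaurentPolynomial.T (n - a.degree) :=
    (basisMonomials σ k).constr_basis k _ a
  rw [h1]
  exact (AddMonoidAlgebra.basis ℤ k).constr_basis k _ n

lemma orbitAction_apply_T (p : σ → k) {F : MvPolynomial σ k} {m : ℕ} (hF : F.IsHomogeneous m)
    (n : ℤ) : orbitAction p F (LaurentPolynomial.T n)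
      = eval (orbitPoint p n) F • LaurentPolynomial.T (n - m) := by
  have h : ∀ a ∈ F.support, orbitAction p (monomial a (coeff a F)) (LaurentPolynomial.T n)
      = eval (orbitPoint p n) (monomial a (coeff a F)) • LaurentPolynomial.T (n - m) := by
    intro a ha
    have h1 : monomial a (coeff a F) = coeff a F • monomial a 1 := by simp [smul_monomial]
    rw [h1, map_smul, LinearMap.smul_apply, orbitAction_monomial_one,
      degree_eq_of_mem_support hF ha, smul_eval, mul_smul]
  rw [F.as_sum, map_sum, LinearMap.sum_apply, Finset.sum_congr rfl h, map_sum, Finset.sum_smul]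

lemma orbitPoint_mul {p : σ → k} (hp : ∀ i, p i ≠ 0) (a b : ℤ) :
    orbitPoint p a * orbitPoint p b = orbitPoint p (a + b) :=
  funext fun i => (zpow_add₀ (hp i) a b).symm

lemma orbitAction_mul {p : σ → k} (hp : ∀ i, p i ≠ 0) (F G : MvPolynomial σ k) :
    orbitAction p F * orbitAction p G
      = orbitAction p (twistedMul (fun b => orbitPoint p (-(b : ℤ))) F G) := by
  conv_lhs => rw [← sum_homogeneousComponent F, ← sum_homogeneousComponent G]
  rw [twistedMul]
  conv_rhs => rw [← sum_homogeneousComponent F]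
  simp only [map_sum, Finset.sum_mul, Finset.mul_sum]
  refine Finset.sum_congr rfl fun b _ => Finset.sum_congr rfl fun a _ => ?_
  have ha := homogeneousComponent_isHomogeneous a F
  have hb := homogeneousComponent_isHomogeneous b G
  refine laurentPolynomial_end_ext fun n => ?_
  rw [Module.End.mul_apply, orbitAction_apply_T p hb, map_smul, orbitAction_apply_T p ha,
    orbitAction_apply_T p ((isHomogeneous_scaleVars _ ha).mul hb), eval_mul, eval_scaleVars,
    orbitPoint_mul hp, smul_smul, mul_comm, neg_add_eq_sub]
  congr 2
  push_cast
  ring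

lemma orbitAction_injective {p : σ → k} (hd : ∀ F : MvPolynomial σ k, F ≠ 0 → ∀ m,
    F.IsHomogeneous m → {n : ℕ | eval (orbitPoint p n) F = 0}.Finite) :
    Function.Injective (orbitAction p) := by
  refine (injective_iff_map_eq_zero _).mpr fun F hF => ?_
  rw [← sum_homogeneousComponent F]
  refine Finset.sum_eq_zero fun m hm => ?_
  by_contra hne
  refine Set.infinite_univ (α := ℕ) ((hd _ hne m (homogeneousComponent_isHomogeneous m F)).subset
    fun n _ => ?_)
  have h1 := congrArg (fun f => (f (LaurentPolynomial.T n)).coeff (n - m)) hF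
  rw [← sum_homogeneousComponent F, map_sum, LinearMap.sum_apply, Finset.sum_congr rfl
    fun a _ => orbitAction_apply_T p (homogeneousComponent_isHomogeneous a F) n] at h1
  simp only [AddMonoidAlgebra.coeff_sum, AddMonoidAlgebra.coeff_smul, Finsupp.finsetSum_apply,
    Finsupp.smul_apply, LaurentPolynomial.T_apply, sub_right_inj, Nat.cast_inj] at h1
  simpa [Finset.mem_range.mp hm, (Finset.mem_range.mp hm).not_ge] using h1

end Action

end TwistedMultiplication
section EulerianAlgebra

variable {k σ : Type*} [Field k]

/-- Vanishing of the homogeneous components of a polynomial on the initial segments of the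
orbit. -/
def VanishesOnOrbit (p : σ → k) (F : MvPolynomial σ k) : Prop :=
  ∀ m : ℕ, ∀ j < m, eval (orbitPoint p j) (homogeneousComponent m F) = 0

lemma VanishesOnOrbit.twistedMul {p : σ → k} (hp : ∀ i, p i ≠ 0) {F G : MvPolynomial σ k}
    (hF : VanishesOnOrbit p F) (hG : VanishesOnOrbit p G) :
    VanishesOnOrbit p (twistedMul (fun b => orbitPoint p (-(b : ℤ))) F G) := by
  intro m j hj
  rw [homogeneousComponent_twistedMul, map_sum]
  refine Finset.sum_eq_zero fun x hx => ?_
  have hx' := Finset.HasAntidiagonal.mem_antidiagonal.mp hx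
  rw [eval_mul, eval_scaleVars, orbitPoint_mul hp]
  rcases lt_or_ge j x.2 with h | h
  · rw [hG _ _ h, mul_zero]
  · rw [show -(x.2 : ℤ) + j = ((j - x.2 : ℕ) : ℤ) by omega, hF _ _ (by omega), zero_mul]

/-- `Ψ` realizes `A` as an algebra of polynomials under twisted multiplication whose components
vanish on the initial segments of the orbit, containing all differences of coordinates. -/
structure IsTwistedRealization {A : Type*} [Ring A] [Algebra k A] (p : σ → k) (o : σ)
    (Ψ : A →ₗ[k] MvPolynomial σ k) : Prop where
  injective : Function.Injective Ψ
  map_one : Ψ 1 = 1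
  map_mul : ∀ x y, Ψ (x * y) = twistedMul (fun b => orbitPoint p (-(b : ℤ))) (Ψ x) (Ψ y)
  vanishes : ∀ x, VanishesOnOrbit p (Ψ x)
  exists_eq_sub : ∀ i, ∃ x, Ψ x = X i - X o

lemma orbitAction_C (p : σ → k) (r : k) :
    orbitAction p (C r) = algebraMap k (Module.End k (LaurentPolynomial k)) r := by
  refine laurentPolynomial_end_ext fun n => ?_
  rw [orbitAction_apply_T p (isHomogeneous_C σ r)]
  simp

lemma orbitAction_X_sub_X (p : σ → k) (i o : σ) (n : ℤ) :
    orbitAction p (X i - X o) (LaurentPolynomial.T n)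
      = (p i ^ n - p o ^ n) • LaurentPolynomial.T (n - 1) := by
  rw [orbitAction_apply_T p ((isHomogeneous_X k i).sub (isHomogeneous_X k o))]
  simp [orbitPoint]

lemma vanishesOnOrbit_of_isHomogeneous {p : σ → k} {F : MvPolynomial σ k} {d : ℕ}
    (hF : F.IsHomogeneous d) (h : ∀ j < d, eval (orbitPoint p j) F = 0) : VanishesOnOrbit p F := by
  intro m j hj
  rw [homogeneousComponent_of_mem hF]
  split_ifs with hm
  · exact h j (hm ▸ hj)
  · simp

theorem exists_isTwistedRealization_adjoin {τ : Type*} {p : τ → k} (hp0 : ∀ i, p i ≠ 0)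
    (hp1 : ∀ i, p i ≠ 1) (hd : ∀ F : MvPolynomial (Option τ) k, F ≠ 0 → ∀ m,
      F.IsHomogeneous m → {n : ℕ | eval (orbitPoint (consOne p) n) F = 0}.Finite)
    {D : τ → Module.End k (LaurentPolynomial k)}
    (hD : ∀ i, ∀ n : ℤ, D i (LaurentPolynomial.T n)
      = ((p i ^ n - 1) / (p i - 1)) • LaurentPolynomial.T (n - 1)) :
    ∃ Ψ : Algebra.adjoin k (Set.range D) →ₗ[k] MvPolynomial (Option τ) k,
      IsTwistedRealization (consOne p) none Ψ := by
  have hq : ∀ i, consOne p i ≠ 0 := fun i => by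
    cases i with
    | none => exact one_ne_zero
    | some i => exact hp0 i
  have hinj := orbitAction_injective hd
  have hDi : ∀ i, orbitAction (consOne p) (X (some i) - X none) = (p i - 1) • D i := fun i =>
    laurentPolynomial_end_ext fun n => by
      rw [orbitAction_X_sub_X, LinearMap.smul_apply, hD, smul_smul,
        mul_div_cancel₀ _ (sub_ne_zero.mpr (hp1 i))]
      simp [consOne]
  have hsub : ∀ i, VanishesOnOrbit (consOne p) (X (some i) - X none) := fun i =>
    vanishesOnOrbit_of_isHomogeneous ((isHomogeneous_X k _).sub (isHomogeneous_X k _))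
      fun j hj => by simp [Nat.lt_one_iff.mp hj, orbitPoint]
  have hsmul : ∀ (r : k) {F : MvPolynomial (Option τ) k}, VanishesOnOrbit (consOne p) F →
      VanishesOnOrbit (consOne p) (r • F) := fun r F hF m j hj => by
    rw [map_smul, smul_eval, hF m j hj, mul_zero]
  have key : ∀ a ∈ Algebra.adjoin k (Set.range D),
      ∃ F, VanishesOnOrbit (consOne p) F ∧ orbitAction (consOne p) F = a := by
    intro a ha
    induction ha using Algebra.adjoin_induction with
    | mem x hx =>
      obtain ⟨i, rfl⟩ := hx
      refine ⟨(p i - 1)⁻¹ • (X (some i) - X none), hsmul _ (hsub i), ?_⟩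
      rw [map_smul, hDi, inv_smul_smul₀ (sub_ne_zero.mpr (hp1 i))]
    | algebraMap r =>
      exact ⟨C r, vanishesOnOrbit_of_isHomogeneous (isHomogeneous_C _ r) (by simp),
        orbitAction_C _ r⟩
    | add x y _ _ hx hy =>
      obtain ⟨F, hF, rfl⟩ := hx
      obtain ⟨G, hG, rfl⟩ := hy
      refine ⟨F + G, fun m j hj => ?_, map_add _ _ _⟩
      rw [map_add, eval_add, hF m j hj, hG m j hj, add_zero]
    | mul x y _ _ hx hy =>
      obtain ⟨F, hF, rfl⟩ := hx
      obtain ⟨G, hG, rfl⟩ := hy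
      exact ⟨_, hF.twistedMul hq hG, (orbitAction_mul hq F G).symm⟩
  let A := Algebra.adjoin k (Set.range D)
  let Ψ : A →ₗ[k] MvPolynomial (Option τ) k :=
    (LinearEquiv.ofInjective (orbitAction (consOne p)) hinj).symm.toLinearMap ∘ₗ
      LinearMap.codRestrict (LinearMap.range (orbitAction (consOne p))) A.val.toLinearMap
        fun a => (key a a.2).imp fun _ h => h.2
  have hΨ : ∀ a : A, orbitAction (consOne p) (Ψ a) = a := fun a =>
    congrArg Subtype.val ((LinearEquiv.ofInjective (orbitAction (consOne p)) hinj).apply_symm_apply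
      ⟨(a : Module.End k (LaurentPolynomial k)), (key a a.2).imp fun _ h => h.2⟩)
  refine ⟨Ψ, fun a b hab => ?_, hinj ?_, fun x y => hinj ?_, fun x => ?_, fun i => ?_⟩
  · exact Subtype.ext (by rw [← hΨ a, ← hΨ b, hab])
  · rw [hΨ, ← C_1, orbitAction_C, map_one]
    rfl
  · rw [hΨ, ← orbitAction_mul hq, hΨ, hΨ]
    rfl
  · obtain ⟨F, hF, hFx⟩ := key x x.2
    rwa [hinj ((hΨ x).trans hFx.symm)]
  · cases i with
    | none => exact ⟨0, by simp⟩
    | some i =>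
      refine ⟨(p i - 1) • ⟨D i, Algebra.subset_adjoin ⟨i, rfl⟩⟩, hinj ?_⟩
      rw [hΨ, hDi]
      rfl

end EulerianAlgebra
section TwistedRealization

variable {k σ A : Type*} [Field k] [Ring A] [Algebra k A] {p : σ → k} {o : σ}
  {Ψ : A →ₗ[k] MvPolynomial σ k}

lemma IsTwistedRealization.homogeneousComponent_mul (h : IsTwistedRealization p o Ψ) (x y : A)
    (m : ℕ) : homogeneousComponent m (Ψ (x * y)) = ∑ z ∈ Finset.HasAntidiagonal.antidiagonal m,
      scaleVars (orbitPoint p (-(z.2 : ℤ))) (homogeneousComponent z.1 (Ψ x)) *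
        homogeneousComponent z.2 (Ψ y) := by
  rw [h.map_mul, homogeneousComponent_twistedMul]

lemma homogeneousComponent_X_sub_X (i o : σ) (m : ℕ) :
    homogeneousComponent m (X i - X o : MvPolynomial σ k) = if m = 1 then X i - X o else 0 :=
  homogeneousComponent_of_mem ((isHomogeneous_X k i).sub (isHomogeneous_X k o))

lemma IsTwistedRealization.homogeneousComponent_succ_sub_mul (h : IsTwistedRealization p o Ψ)
    (ho : p o = 1) {x : A} {i : σ} (hx : Ψ x = X i - X o) (y : A) (m : ℕ) :
    homogeneousComponent (m + 1) (Ψ (x * y))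
      = (C (p i ^ (-(m : ℤ))) * X i - X o) * homogeneousComponent m (Ψ y) := by
  rw [h.homogeneousComponent_mul, Finset.sum_eq_single (1, m)]
  · simp [hx, homogeneousComponent_X_sub_X, orbitPoint, ho]
  · intro z hz hne
    have hz' := Finset.HasAntidiagonal.mem_antidiagonal.mp hz
    rw [hx, homogeneousComponent_X_sub_X, if_neg, map_zero, zero_mul]
    exact fun h1 => hne (Prod.ext h1 (by simp only; omega))
  · intro hz
    exact absurd (Finset.HasAntidiagonal.mem_antidiagonal.mpr (Nat.add_comm 1 m)) hz

lemma IsTwistedRealization.homogeneousComponent_succ_mul_sub (h : IsTwistedRealization p o Ψ)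
    {x : A} {i : σ} (hx : Ψ x = X i - X o) (y : A) (m : ℕ) :
    homogeneousComponent (m + 1) (Ψ (y * x))
      = scaleVars (orbitPoint p (-1)) (homogeneousComponent m (Ψ y)) * (X i - X o) := by
  rw [h.homogeneousComponent_mul, Finset.sum_eq_single (m, 1)]
  · simp [hx, homogeneousComponent_X_sub_X]
  · intro z hz hne
    have hz' := Finset.HasAntidiagonal.mem_antidiagonal.mp hz
    rw [hx, homogeneousComponent_X_sub_X, if_neg, mul_zero]
    exact fun h1 => hne (Prod.ext (by simp only; omega) h1)
  · intro hz
    exact absurd (Finset.HasAntidiagonal.mem_antidiagonal.mpr (by rfl)) hz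

lemma C_zpow_mul_X_sub_X {i o : σ} (hpi : p i ≠ 0) (n : ℤ) :
    C (p i ^ n) * X i - X o = C (p i ^ n) * (X i - C (p i ^ (-n)) * X o) := by
  rw [mul_sub, ← mul_assoc, ← C_mul, ← zpow_add₀ hpi, add_neg_cancel, zpow_zero, C_1, one_mul]

theorem IsTwistedRealization.isNoetherianRing [Fintype σ] (h : IsTwistedRealization p o Ψ)
    (hp : ∀ i, p i ≠ 0) (ho : p o = 1) {e : σ} (he : Function.Injective fun n : ℤ => p e ^ n)
    (hd : ∀ F : MvPolynomial σ k, F ≠ 0 → ∀ m, F.IsHomogeneous m →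
      {n : ℕ | eval (orbitPoint p n) F = 0}.Finite) : IsNoetherianRing A := by
  choose x hx using h.exists_eq_sub
  refine isNoetherianRing_of_isPointSystem (d := fun j : ℕ => orbitPoint p j) (o := o) (e := e)
    (fun j => by simp [orbitPoint, ho]) (fun a b hab => Nat.cast_injective (he hab)) hd Ψ h.injective
    x (fun i m => p i ^ (-(m : ℤ))) (fun i m => zpow_ne_zero _ (hp i)) (fun i a m => ?_) h.vanishes
  rw [h.homogeneousComponent_succ_sub_mul ho (hx i), C_zpow_mul_X_sub_X (hp i), neg_neg]
  rfl

/-- Rescaling of the component of degree `m` by `orbitPoint p m`, for all `m`. -/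
def untwist (p : σ → k) : MvPolynomial σ k →ₗ[k] MvPolynomial σ k :=
  (basisMonomials σ k).constr k fun a =>
    scaleVars (orbitPoint p a.degree) (monomial a 1)

lemma untwist_of_isHomogeneous (p : σ → k) {F : MvPolynomial σ k} {m : ℕ}
    (hF : F.IsHomogeneous m) : untwist p F = scaleVars (orbitPoint p m) F := by
  have h : ∀ a ∈ F.support, untwist p (monomial a (coeff a F))
      = scaleVars (orbitPoint p m) (monomial a (coeff a F)) := by
    intro a ha
    have h1 : monomial a (coeff a F) = coeff a F • monomial a 1 := by simp [smul_monomial]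
    have h2 : untwist p (monomial a 1) = scaleVars (orbitPoint p a.degree) (monomial a 1) :=
      (basisMonomials σ k).constr_basis k _ a
    rw [h1, map_smul, map_smul, h2, degree_eq_of_mem_support hF ha]
  rw [F.as_sum, map_sum, map_sum, Finset.sum_congr rfl h]

lemma homogeneousComponent_untwist (p : σ → k) (F : MvPolynomial σ k) (m : ℕ) :
    homogeneousComponent m (untwist p F)
      = scaleVars (orbitPoint p m) (homogeneousComponent m F) := by
  conv_lhs => rw [← sum_homogeneousComponent F]
  simp only [map_sum]
  have h : ∀ a, homogeneousComponent m (untwist p (homogeneousComponent a F))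
      = if m = a then scaleVars (orbitPoint p a) (homogeneousComponent a F) else 0 := fun a => by
    have ha := homogeneousComponent_isHomogeneous a F
    rw [untwist_of_isHomogeneous p ha]
    exact homogeneousComponent_of_mem (isHomogeneous_scaleVars _ ha)
  rw [Finset.sum_congr rfl fun a _ => h a, Finset.sum_ite_eq]
  split_ifs with hm
  · rfl
  · rw [homogeneousComponent_eq_zero _ _ (by simpa using hm), map_zero]

lemma scaleVars_scaleVars (u v : σ → k) (F : MvPolynomial σ k) :
    scaleVars u (scaleVars v F) = scaleVars (u * v) F := by
  have h : (scaleVars u).comp (scaleVars v) = scaleVars (u * v) :=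
    algHom_ext fun i => by simp [mul_comm, mul_left_comm]
  exact DFunLike.congr_fun h F

lemma scaleVars_orbitPoint_zero (p : σ → k) (F : MvPolynomial σ k) :
    scaleVars (orbitPoint p 0) F = F := by
  have h : scaleVars (orbitPoint p 0) = AlgHom.id k (MvPolynomial σ k) :=
    algHom_ext fun i => by simp [orbitPoint]
  rw [h, AlgHom.id_apply]

lemma untwist_injective (hp : ∀ i, p i ≠ 0) : Function.Injective (untwist p) := by
  refine (injective_iff_map_eq_zero _).mpr fun F hF => ?_
  rw [← sum_homogeneousComponent F]
  refine Finset.sum_eq_zero fun m _ => ?_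
  have h1 := congrArg (fun f => scaleVars (orbitPoint p (-(m : ℤ))) (homogeneousComponent m f)) hF
  simp only [homogeneousComponent_untwist, scaleVars_scaleVars, orbitPoint_mul hp] at h1
  simpa [scaleVars_orbitPoint_zero] using h1

theorem IsTwistedRealization.isNoetherianRing_mulOpposite [Fintype σ]
    (h : IsTwistedRealization p o Ψ) (hp : ∀ i, p i ≠ 0) (ho : p o = 1) {e : σ}
    (he : Function.Injective fun n : ℤ => p e ^ n)
    (hd : ∀ F : MvPolynomial σ k, F ≠ 0 → ∀ m, F.IsHomogeneous m →
      {n : ℕ | eval (orbitPoint p (-(n : ℤ))) F = 0}.Finite) : IsNoetherianRing Aᵐᵒᵖ := by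
  choose x hx using h.exists_eq_sub
  refine isNoetherianRing_of_isPointSystem (d := fun j : ℕ => orbitPoint p (-((j + 1 : ℕ) : ℤ)))
    (o := o) (e := e) (fun j => by simp [orbitPoint, ho]) (fun a b hab => ?_)
    (fun F hF m hm => (hd F hF m hm).preimage (Nat.succ_injective.injOn))
    (untwist p ∘ₗ Ψ ∘ₗ (MulOpposite.opLinearEquiv k).symm.toLinearMap)
    ((untwist_injective hp).comp (h.injective.comp (MulOpposite.opLinearEquiv k).symm.injective))
    (fun i => MulOpposite.op (x i)) (fun i m => p i ^ (m + 1 : ℤ))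
    (fun i m => zpow_ne_zero _ (hp i)) (fun i a m => ?_) (fun a m j hj => ?_)
  · have := he hab
    simp only [neg_inj] at this
    omega
  · have h1 : homogeneousComponent (m + 1) (untwist p (Ψ (a.unop * x i)))
        = C (p i ^ (m + 1 : ℤ)) * (X i - C (p i ^ (-(m + 1 : ℤ))) * X o)
          * homogeneousComponent m (untwist p (Ψ a.unop)) := by
      rw [homogeneousComponent_untwist, h.homogeneousComponent_succ_mul_sub (hx i), _root_.map_mul,
        scaleVars_scaleVars, orbitPoint_mul hp, ← C_zpow_mul_X_sub_X (hp i),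
        homogeneousComponent_untwist, mul_comm]
      simp [orbitPoint, ho]
    simpa [orbitPoint] using h1
  · have h1 : eval (orbitPoint p (-((j + 1 : ℕ) : ℤ)))
        (homogeneousComponent m (untwist p (Ψ a.unop))) = 0 := by
      rw [homogeneousComponent_untwist, eval_scaleVars, orbitPoint_mul hp,
        show (m : ℤ) + -((j + 1 : ℕ) : ℤ) = ((m - (j + 1) : ℕ) : ℤ) by omega]
      exact h.vanishes _ _ _ (by omega)
    exact h1

end TwistedRealization
section TensorProduct

open scoped TensorProduct

variable {k σ A B : Type*} [Field k] [Ring A] [Algebra k A] [CommRing B] [Algebra k B]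
  {p : σ → k} {o : σ} {Ψ : A →ₗ[k] MvPolynomial σ k}

lemma eval_map_comp {R S : Type*} [CommSemiring R] [CommSemiring S] (g : R →+* S) (x : σ → R)
    (f : MvPolynomial σ R) : eval (g ∘ x) (map g f) = g (eval x f) := by
  induction f using MvPolynomial.induction_on with
  | C r => simp
  | add f g hf hg => simp [hf, hg]
  | mul_X f i hf => simp [hf]

lemma eval_sub_eval_mem {R : Type*} [CommRing R] {I : Ideal R} {x y : σ → R}
    (h : ∀ i, x i - y i ∈ I) (f : MvPolynomial σ R) : eval x f - eval y f ∈ I := by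
  rw [← Ideal.Quotient.mk_eq_mk_iff_sub_mem, ← eval_map_comp, ← eval_map_comp]
  congr 2
  exact funext fun i => (Ideal.Quotient.mk_eq_mk_iff_sub_mem _ _).mpr (h i)

/-- Extension of scalars of a linear map with values in a polynomial ring. -/
def extendScalars (B : Type*) [CommRing B] [Algebra k B] (Ψ : A →ₗ[k] MvPolynomial σ k) :
    A ⊗[k] B →ₗ[k] MvPolynomial σ B :=
  TensorProduct.lift <| LinearMap.mk₂ k (fun r b => b • map (algebraMap k B) (Ψ r))
    (fun r s b => by simp) (fun c r b => by
      rw [map_smul, smul_eq_C_mul _ c, _root_.map_mul, map_C, ← smul_eq_C_mul, algebraMap_smul,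
        smul_comm])
    (fun r b b' => add_smul _ _ _) (fun c r b => smul_assoc _ _ _)

lemma extendScalars_tmul (r : A) (b : B) :
    extendScalars B Ψ (r ⊗ₜ b) = b • map (algebraMap k B) (Ψ r) := rfl

lemma homogeneousComponent_extendScalars_tmul (r : A) (b : B) (m : ℕ) :
    homogeneousComponent m (extendScalars B Ψ (r ⊗ₜ b))
      = b • map (algebraMap k B) (homogeneousComponent m (Ψ r)) := by
  rw [extendScalars_tmul, map_smul, map_homogeneousComponent]

lemma IsTwistedRealization.homogeneousComponent_extendScalars_mul
    (h : IsTwistedRealization p o Ψ) (x y : A ⊗[k] B) (m : ℕ) :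
    homogeneousComponent m (extendScalars B Ψ (x * y))
      = ∑ z ∈ Finset.HasAntidiagonal.antidiagonal m,
        scaleVars (algebraMap k B ∘ orbitPoint p (-(z.2 : ℤ)))
          (homogeneousComponent z.1 (extendScalars B Ψ x)) *
        homogeneousComponent z.2 (extendScalars B Ψ y) := by
  induction x using TensorProduct.induction_on with
  | zero => simp
  | add x x' hx hx' => simp only [add_mul, map_add, hx, hx', Finset.sum_add_distrib]
  | tmul r b =>
    induction y using TensorProduct.induction_on with
    | zero => simp
    | add y y' hy hy' => simp only [mul_add, map_add, hy, hy', Finset.sum_add_distrib]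
    | tmul r' b' =>
      rw [Algebra.TensorProduct.tmul_mul_tmul, homogeneousComponent_extendScalars_tmul,
        h.homogeneousComponent_mul, map_sum, Finset.smul_sum]
      refine Finset.sum_congr rfl fun z _ => ?_
      rw [homogeneousComponent_extendScalars_tmul, homogeneousComponent_extendScalars_tmul,
        _root_.map_mul, map_scaleVars, map_smul, smul_mul_smul_comm]

lemma IsTwistedRealization.eval_extendScalars (h : IsTwistedRealization p o Ψ) (x : A ⊗[k] B)
    {m j : ℕ} (hj : j < m) : eval (algebraMap k B ∘ orbitPoint p j)
      (homogeneousComponent m (extendScalars B Ψ x)) = 0 := by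
  induction x using TensorProduct.induction_on with
  | zero => simp
  | add x y hx hy => rw [map_add, map_add, eval_add, hx, hy, add_zero]
  | tmul r b =>
    rw [homogeneousComponent_extendScalars_tmul, smul_eval, eval_map_comp, h.vanishes r m j hj,
      map_zero, mul_zero]

/-- The left ideal of elements all of whose homogeneous components vanish at a point. -/
def IsTwistedRealization.vanishingIdeal (h : IsTwistedRealization p o Ψ) (q : σ → B) :
    Ideal (A ⊗[k] B) where
  carrier := {y | ∀ m, eval q (homogeneousComponent m (extendScalars B Ψ y)) = 0}
  zero_mem' m := by simp
  add_mem' hx hy m := by rw [map_add, map_add, eval_add, hx m, hy m, add_zero]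
  smul_mem' s y hy m := by
    rw [smul_eq_mul, h.homogeneousComponent_extendScalars_mul, map_sum]
    exact Finset.sum_eq_zero fun z _ => by rw [eval_mul, hy z.2, mul_zero]

lemma IsTwistedRealization.eval_pderiv_mul_mem (h : IsTwistedRealization p o Ψ)
    (hp : ∀ i, p i ≠ 0) {q : σ → B} {I : Ideal B} {j : ℕ}
    (hq : ∀ i, algebraMap k B (p i ^ j) - q i ∈ I) (e : σ) (s : A ⊗[k] B) {l : A ⊗[k] B}
    (hl : l ∈ h.vanishingIdeal q) (hlj : homogeneousComponent (j + 1) (extendScalars B Ψ l) = 0) :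
    eval (algebraMap k B ∘ orbitPoint p j)
      (pderiv e (homogeneousComponent (j + 1) (extendScalars B Ψ (s * l)))) ∈ I := by
  rw [h.homogeneousComponent_extendScalars_mul, map_sum, map_sum]
  refine I.sum_mem fun z hz => ?_
  have hz' := Finset.HasAntidiagonal.mem_antidiagonal.mp hz
  rcases Nat.eq_or_lt_of_le (show z.2 ≤ j + 1 by omega) with hzj | hzj
  · rw [hzj, hlj, mul_zero, map_zero, map_zero]
    exact I.zero_mem
  · have h0 : eval (algebraMap k B ∘ orbitPoint p j)
        (scaleVars (algebraMap k B ∘ orbitPoint p (-(z.2 : ℤ)))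
          (homogeneousComponent z.1 (extendScalars B Ψ s))) = 0 := by
      have hc : (algebraMap k B ∘ orbitPoint p (-(z.2 : ℤ))) * (algebraMap k B ∘ orbitPoint p j)
          = algebraMap k B ∘ orbitPoint p ((j - z.2 : ℕ) : ℤ) := by
        rw [show ((j - z.2 : ℕ) : ℤ) = -z.2 + j by omega, ← orbitPoint_mul hp]
        exact funext fun i => (_root_.map_mul _ _ _).symm
      rw [eval_scaleVars, hc]
      exact h.eval_extendScalars s (by omega)
    rw [pderiv_mul, eval_add, eval_mul, eval_mul, h0, zero_mul, add_zero]
    refine I.mul_mem_left _ ?_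
    have h1 := eval_sub_eval_mem (I := I) (x := algebraMap k B ∘ orbitPoint p j) (y := q)
      (fun i => by simpa [orbitPoint] using hq i)
      (homogeneousComponent z.2 (extendScalars B Ψ l))
    rwa [hl z.2, sub_zero] at h1

lemma IsTwistedRealization.homogeneousComponent_zero_sub_mul (h : IsTwistedRealization p o Ψ)
    {x : A} {i : σ} (hx : Ψ x = X i - X o) (y : A) :
    homogeneousComponent 0 (Ψ (x * y)) = 0 := by
  rw [h.homogeneousComponent_mul, Finset.Nat.antidiagonal_zero, Finset.sum_singleton, hx,
    homogeneousComponent_X_sub_X, if_neg zero_ne_one, map_zero, zero_mul]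

lemma IsTwistedRealization.homogeneousComponent_sub_mul (h : IsTwistedRealization p o Ψ)
    (ho : p o = 1) {x y : A} {i : σ} (hx : Ψ x = X i - X o) {F : MvPolynomial σ k} {j : ℕ}
    (hy : ∀ m, homogeneousComponent m (Ψ y) = if m = j then F else 0) (m : ℕ) :
    homogeneousComponent m (Ψ (x * y))
      = if m = j + 1 then (C (p i ^ (-(j : ℤ))) * X i - X o) * F else 0 := by
  cases m with
  | zero => simpa using h.homogeneousComponent_zero_sub_mul hx y
  | succ m =>
    rw [h.homogeneousComponent_succ_sub_mul ho hx, hy]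
    by_cases hm : m = j
    · simp [hm]
    · simp [hm]

lemma IsTwistedRealization.homogeneousComponent_sub_pow (h : IsTwistedRealization p o Ψ)
    (ho : p o = 1) {x : A} {i : σ} (hx : Ψ x = X i - X o) (j m : ℕ) :
    homogeneousComponent m (Ψ (x ^ j)) = if m = j then
      ∏ n ∈ Finset.range j, (C (p i ^ (-(n : ℤ))) * X i - X o) else 0 := by
  induction j generalizing m with
  | zero =>
    rw [pow_zero, h.map_one, Finset.prod_range_zero]
    exact homogeneousComponent_of_mem (isHomogeneous_one σ k)
  | succ j ih =>
    rw [pow_succ', h.homogeneousComponent_sub_mul ho hx ih, Finset.prod_range_succ, mul_comm]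

lemma IsTwistedRealization.exists_mem_vanishingIdeal (h : IsTwistedRealization p o Ψ)
    (hp : ∀ i, p i ≠ 0) (ho : p o = 1) {e e' : σ} (heo : e' ≠ o) (hee : e' ≠ e)
    (hpe : ∀ n : ℕ, n ≠ 0 → p e ^ n ≠ 1) {q : σ → B} (hqo : q o = 1) (j : ℕ)
    {θ : B} (hθ : q e' - algebraMap k B (p e' ^ j) = θ * (q e - algebraMap k B (p e ^ j))) :
    ∃ y ∈ h.vanishingIdeal q, IsUnit (eval (algebraMap k B ∘ orbitPoint p j)
      (pderiv e' (homogeneousComponent (j + 1) (extendScalars B Ψ y)))) := by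
  obtain ⟨x, hx⟩ := h.exists_eq_sub e
  obtain ⟨x', hx'⟩ := h.exists_eq_sub e'
  let F : MvPolynomial σ k := ∏ n ∈ Finset.range j, (C (p e ^ (-(n : ℤ))) * X e - X o)
  have h1 : ∀ m, homogeneousComponent m (Ψ (x * x ^ j)) = _ :=
    h.homogeneousComponent_sub_mul ho hx (h.homogeneousComponent_sub_pow ho hx j)
  have h2 : ∀ m, homogeneousComponent m (Ψ (x' * x ^ j)) = _ :=
    h.homogeneousComponent_sub_mul ho hx' (h.homogeneousComponent_sub_pow ho hx j)
  refine ⟨(x' * x ^ j) ⊗ₜ 1 -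
    (x * x ^ j) ⊗ₜ (algebraMap k B (p e' ^ (-(j : ℤ)) * p e ^ j) * θ), fun m => ?_, ?_⟩
  · rw [map_sub, map_sub, homogeneousComponent_extendScalars_tmul,
      homogeneousComponent_extendScalars_tmul, h1, h2]
    split_ifs
    · have hinv : ∀ i, algebraMap k B (p i ^ (-(j : ℤ))) * algebraMap k B (p i ^ j) = 1 := fun i => by
        rw [← _root_.map_mul, zpow_neg, zpow_natCast, inv_mul_cancel₀ (pow_ne_zero _ (hp i)),
          _root_.map_one]
      rw [eval_sub, smul_eval, smul_eval]
      simp only [_root_.map_mul, map_sub, map_C, map_X, eval_C, eval_X, hqo]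
      linear_combination (algebraMap k B (p e' ^ (-(j : ℤ))) * hθ + hinv e'
        - θ * algebraMap k B (p e' ^ (-(j : ℤ))) * q e * hinv e) *
        eval q (map (algebraMap k B) F)
    · simp
  · have hF : pderiv e' F = 0 := by
      refine Finset.prod_induction _ (fun f => pderiv e' f = 0)
        (fun f g hf hg => by rw [pderiv_mul, hf, hg, zero_mul, mul_zero, add_zero]) pderiv_one
        fun n _ => ?_
      rw [map_sub, pderiv_mul, pderiv_C, pderiv_X_of_ne hee.symm, pderiv_X_of_ne heo.symm]
      simp
    have hFj : eval (orbitPoint p j) F ≠ 0 := by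
      rw [eval_prod]
      refine Finset.prod_ne_zero_iff.mpr fun n hn => ?_
      have hn' := Finset.mem_range.mp hn
      have h3 : p e ^ (-(n : ℤ)) * p e ^ (j : ℤ) = p e ^ (j - n) := by
        rw [← zpow_add₀ (hp e), ← zpow_natCast, Nat.cast_sub hn'.le, neg_add_eq_sub]
      simp only [map_sub, _root_.map_mul, eval_C, eval_X, orbitPoint, ho, one_zpow, h3]
      exact sub_ne_zero.mpr (hpe _ (by omega))
    have hd : ∀ i, pderiv e' ((C (p i ^ (-(j : ℤ))) * X i - X o) * F)
        = C (p i ^ (-(j : ℤ))) * pderiv e' (X i) * F := fun i => by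
      rw [pderiv_mul, hF, map_sub, pderiv_mul, pderiv_C, pderiv_X_of_ne heo.symm]
      ring
    rw [map_sub, map_sub, homogeneousComponent_extendScalars_tmul,
      homogeneousComponent_extendScalars_tmul, h1, h2, if_pos rfl, if_pos rfl, one_smul, map_sub,
      Derivation.map_smul, pderiv_map, pderiv_map, hd, hd, pderiv_X_self, pderiv_X_of_ne hee.symm, mul_zero,
      zero_mul, map_zero, smul_zero, sub_zero, eval_map_comp, mul_one, eval_mul, eval_C]
    exact (IsUnit.mk0 _ (mul_ne_zero (zpow_ne_zero _ (hp e')) hFj)).map _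

theorem IsTwistedRealization.not_isNoetherianRing_tensorProduct (h : IsTwistedRealization p o Ψ)
    (hp : ∀ i, p i ≠ 0) (ho : p o = 1) {e e' : σ} (heo : e' ≠ o) (hee : e' ≠ e)
    (hpe : ∀ n : ℕ, n ≠ 0 → p e ^ n ≠ 1) {q : σ → B} (hqo : q o = 1)
    (hqe : ∀ j : ℕ, ¬ IsUnit (q e - algebraMap k B (p e ^ j)))
    (hq : ∀ (j : ℕ) i, q e - algebraMap k B (p e ^ j) ∣ q i - algebraMap k B (p i ^ j)) :
    ¬ IsNoetherianRing (A ⊗[k] B) := by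
  intro hN
  obtain ⟨S, hS⟩ := IsNoetherian.noetherian (h.vanishingIdeal q)
  let j := S.sup fun l => (extendScalars B Ψ l).totalDegree
  obtain ⟨θ, hθ⟩ := hq j e'
  obtain ⟨y, hy, hyu⟩ := h.exists_mem_vanishingIdeal hp ho heo hee hpe hqo j
    (hθ.trans (mul_comm _ _))
  let I : Ideal B := Ideal.span {q e - algebraMap k B (p e ^ j)}
  have hqI : ∀ i, algebraMap k B (p i ^ j) - q i ∈ I := fun i => by
    rw [← neg_sub]
    exact I.neg_mem (Ideal.mem_span_singleton.mpr (hq j i))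
  refine hqe j (Ideal.span_singleton_eq_top.mp (I.eq_top_of_isUnit_mem ?_ hyu))
  obtain ⟨f, -, rfl⟩ := Submodule.mem_span_finset.mp (hS.symm ▸ hy)
  simp only [map_sum]
  refine I.sum_mem fun l hl => ?_
  refine h.eval_pderiv_mul_mem hp hqI e' (f l) (hS ▸ Submodule.subset_span hl) ?_
  exact homogeneousComponent_eq_zero _ _ (Nat.lt_succ_of_le (Finset.le_sup (f := fun l =>
    (extendScalars B Ψ l).totalDegree) hl))

end TensorProduct
section ValuationIntersection

variable {k K ι : Type*} [Field k] [Field K] [Algebra k K]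
  {v : ι → Valuation K (WithZero (Multiplicative ℤ))}

/-- The ring of elements which are integral for every member of a family of valuations. -/
def valuationIntersection (v : ι → Valuation K (WithZero (Multiplicative ℤ)))
    (hk : ∀ i (c : k), v i (algebraMap k K c) ≤ 1) : Subalgebra k K where
  carrier := {x | ∀ i, v i x ≤ 1}
  mul_mem' hx hy i := by
    rw [map_mul]
    exact mul_le_one' (hx i) (hy i)
  add_mem' hx hy i := (v i).map_add_le (hx i) (hy i)
  algebraMap_mem' c i := hk i c

variable {hk : ∀ i (c : k), v i (algebraMap k K c) ≤ 1}

lemma valuationIntersection_dvd_of_le {x y : valuationIntersection v hk} (hx : x ≠ 0)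
    (h : ∀ i, v i y ≤ v i x) : x ∣ y := by
  have hx0 : (x : K) ≠ 0 := fun h0 => hx (Subtype.ext h0)
  have hxy : ∀ i, v i ((x : K)⁻¹ * y) ≤ 1 := fun i => by
    rw [map_mul, map_inv₀]
    exact inv_mul_le_one_of_le₀ (h i) zero_le
  exact ⟨⟨_, hxy⟩, Subtype.ext (mul_inv_cancel_left₀ hx0 (y : K)).symm⟩

lemma exists_uniformizer_mem_of_isPrime {ϖ : ι → valuationIntersection v hk}
    (hϖ : ∀ i, v i (ϖ i) = WithZero.exp (-1)) (hϖ' : ∀ i j, i ≠ j → v i (ϖ j) = 1)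
    (hfin : ∀ x : K, x ≠ 0 → {i | v i x ≠ 1}.Finite) {P : Ideal (valuationIntersection v hk)}
    [hP : P.IsPrime] {x : valuationIntersection v hk} (hx : x ∈ P) (hx0 : x ≠ 0) :
    ∃ i, ϖ i ∈ P ∧ v i x < 1 := by
  classical
  have hxK : (x : K) ≠ 0 := fun h0 => hx0 (Subtype.ext h0)
  let S := (hfin x hxK).toFinset
  have hS : ∀ i, i ∈ S ↔ v i x ≠ 1 := fun i => Set.Finite.mem_toFinset _
  let n : ι → ℕ := fun i => (-WithZero.log (v i x)).toNat
  have hn : ∀ i, (WithZero.exp (-1 : ℤ)) ^ n i = v i x := fun i => by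
    have h0 : v i x ≠ 0 := (v i).ne_zero_iff.mpr hxK
    have h1 : WithZero.log (v i x) ≤ 0 := by
      rw [← WithZero.log_one, WithZero.log_le_log h0 one_ne_zero]
      exact x.2 i
    rw [← WithZero.exp_nsmul, ← WithZero.exp_log h0]
    congr 1
    simp only [n, nsmul_eq_mul]
    omega
  let y : valuationIntersection v hk := ∏ i ∈ S, ϖ i ^ n i
  have hy : ∀ i, v i y = v i x := fun i => by
    have hyi : v i y = ∏ j ∈ S, v i (ϖ j) ^ n j := by
      simp [y]
    rw [hyi]
    by_cases hi : i ∈ S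
    · rw [Finset.prod_eq_single_of_mem i hi, hϖ, hn]
      intro j _ hj
      rw [hϖ' i j hj.symm, one_pow]
    · rw [of_not_not (mt (hS i).mpr hi)]
      refine Finset.prod_eq_one fun j hj => ?_
      rw [hϖ' i j fun h => hi (h ▸ hj), one_pow]
  have hyP : y ∈ P := P.mem_of_dvd (valuationIntersection_dvd_of_le hx0 fun i => (hy i).le) hx
  obtain ⟨i, hi, hiP⟩ := hP.prod_mem_iff.mp hyP
  exact ⟨i, hP.mem_of_pow_mem _ hiP, lt_of_le_of_ne (x.2 i) ((hS i).mp hi)⟩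

theorem isPrincipalIdealRing_valuationIntersection {ϖ : ι → valuationIntersection v hk}
    (hϖ : ∀ i, v i (ϖ i) = WithZero.exp (-1)) (hϖ' : ∀ i j, i ≠ j → v i (ϖ j) = 1)
    (hunit : ∀ i j, i ≠ j → IsUnit (ϖ i - ϖ j))
    (hfin : ∀ x : K, x ≠ 0 → {i | v i x ≠ 1}.Finite) :
    IsPrincipalIdealRing (valuationIntersection v hk) := by
  refine IsPrincipalIdealRing.of_prime_ne_bot fun P hP hbot => ?_
  obtain ⟨x, hx, hx0⟩ := Submodule.exists_mem_ne_zero_of_ne_bot hbot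
  obtain ⟨i, hi, -⟩ := exists_uniformizer_mem_of_isPrime hϖ hϖ' hfin hx hx0
  refine ⟨ϖ i, le_antisymm (fun g hg => ?_) (by simpa using hi)⟩
  rcases eq_or_ne g 0 with rfl | hg0
  · exact Submodule.zero_mem _
  obtain ⟨j, hj, hjg⟩ := exists_uniformizer_mem_of_isPrime hϖ hϖ' hfin hg hg0
  obtain rfl : i = j := by
    by_contra hij
    exact hP.ne_top (P.eq_top_of_isUnit_mem (P.sub_mem hi hj) (hunit i j hij))
  have hϖ0 : ϖ i ≠ 0 := fun h0 => WithZero.exp_ne_zero ((hϖ i).symm.trans (by simp [h0]))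
  refine Ideal.mem_span_singleton.mpr (valuationIntersection_dvd_of_le hϖ0 fun l => ?_)
  rcases eq_or_ne l i with rfl | hl
  · rw [hϖ, ← WithZero.lt_mul_exp_iff_le WithZero.exp_ne_zero, ← WithZero.exp_add]
    simpa using hjg
  · rw [hϖ' l i hl]
    exact g.2 l

end ValuationIntersection
section ValuationCongruence

variable {k K ι σ : Type*} [Field k] [Field K] [Algebra k K]
  {v : ι → Valuation K (WithZero (Multiplicative ℤ))}
  {hk : ∀ j (r : k), v j (algebraMap k K r) ≤ 1}

lemma not_isUnit_of_valuation_lt_one {x : valuationIntersection v hk} {j : ι}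
    (hx : v j x < 1) : ¬ IsUnit x := by
  rintro ⟨u, rfl⟩
  have h1 : v j (u : valuationIntersection v hk) * v j (↑u⁻¹ : valuationIntersection v hk) = 1 := by
    rw [← map_mul, ← (v j).map_one]
    exact congrArg (fun x : valuationIntersection v hk => v j x) u.mul_inv
  exact (mul_lt_one_of_lt_of_le hx ((↑u⁻¹ : valuationIntersection v hk).2 j)).ne h1

/-- The ring of elements integral for a family of valuations is noetherian and makes the point `x`
congruent to each point `c j` modulo a nonunit, provided that the `e`-th coordinate of `x - c j`
is a uniformizer for the `j`-th valuation and a unit for the others. -/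
theorem isNoetherianRing_valuationIntersection_and_forall_dvd {e : σ} {c : ι → σ → k}
    (he : Function.Injective fun j => c j e) {x : σ → valuationIntersection v hk}
    (hx : ∀ j i, v j (x i - algebraMap k K (c j i)) = WithZero.exp (-1))
    (hx' : ∀ j l, j ≠ l → v j (x e - algebraMap k K (c l e)) = 1)
    (hfin : ∀ y : K, y ≠ 0 → {j | v j y ≠ 1}.Finite) :
    IsNoetherianRing (valuationIntersection v hk) ∧
      (∀ j, ¬ IsUnit (x e - algebraMap k (valuationIntersection v hk) (c j e))) ∧
      ∀ j i, x e - algebraMap k (valuationIntersection v hk) (c j e) ∣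
        x i - algebraMap k (valuationIntersection v hk) (c j i) := by
  have hPIR : IsPrincipalIdealRing (valuationIntersection v hk) :=
    isPrincipalIdealRing_valuationIntersection
      (ϖ := fun j => x e - algebraMap k (valuationIntersection v hk) (c j e))
      (fun j => hx j e) hx' (fun i j hij => by
        rw [sub_sub_sub_cancel_left, ← map_sub]
        exact (IsUnit.mk0 _ (sub_ne_zero.mpr fun h => hij (he h).symm)).map _) hfin
  have hlt : WithZero.exp (-1 : ℤ) < 1 := by
    rw [← WithZero.exp_zero, WithZero.exp_lt_exp]
    norm_num
  refine ⟨inferInstance, fun j => not_isUnit_of_valuation_lt_one (j := j) ?_, fun j i =>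
    valuationIntersection_dvd_of_le (fun h0 => ?_) fun l => ?_⟩
  · exact (hx j e).trans_lt hlt
  · have h1 : v j ((0 : valuationIntersection v hk) : K) = WithZero.exp (-1) := h0 ▸ hx j e
    exact WithZero.exp_ne_zero (h1.symm.trans (map_zero _))
  · rcases eq_or_ne l j with rfl | hl
    · exact ((hx l i).trans (hx l e).symm).le
    · exact ((x i - algebraMap k (valuationIntersection v hk) (c j i)).2 l).trans_eq
        (hx' l j hl).symm

end ValuationCongruence

section CurveValuation

variable {k σ : Type*} [Field k]

/-- The parametrization of the line through the point `c` in the generic direction. -/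
def genericLine (c : σ → k) :
    MvPolynomial σ k →ₐ[k] Polynomial (FractionRing (MvPolynomial σ k)) :=
  aeval fun i => Polynomial.C (algebraMap k _ (c i)) +
    Polynomial.C (algebraMap (MvPolynomial σ k) _ (X i)) * Polynomial.X

lemma genericLine_X (c : σ → k) (i : σ) :
    genericLine c (X i) = Polynomial.C (algebraMap k _ (c i)) +
      Polynomial.C (algebraMap (MvPolynomial σ k) _ (X i)) * Polynomial.X := aeval_X _ i

lemma genericLine_C (c : σ → k) (r : k) :
    genericLine c (C r) = Polynomial.C (algebraMap k _ r) := aeval_C _ r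

lemma eval_zero_genericLine (c : σ → k) (f : MvPolynomial σ k) :
    (genericLine c f).eval 0 = algebraMap k _ (eval c f) := by
  induction f using MvPolynomial.induction_on with
  | C r => simp
  | add f g hf hg => simp [hf, hg]
  | mul_X f i hf => simp [hf, genericLine_X]

lemma eval_one_genericLine (c : σ → k) (f : MvPolynomial σ k) :
    (genericLine c f).eval 1 = algebraMap _ _ (aeval (fun i => C (c i) + X i) f) := by
  have hC : ∀ r : k, algebraMap k (FractionRing (MvPolynomial σ k)) r
      = algebraMap (MvPolynomial σ k) _ (C r) := fun r =>
    IsScalarTower.algebraMap_apply k (MvPolynomial σ k) _ r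
  induction f using MvPolynomial.induction_on with
  | C r => rw [genericLine_C, Polynomial.eval_C, aeval_C, hC]; rfl
  | add f g hf hg => simp only [map_add, Polynomial.eval_add, hf, hg]
  | mul_X f i hf =>
    simp only [map_mul, Polynomial.eval_mul, hf, genericLine_X, Polynomial.eval_add, aeval_X,
      Polynomial.eval_C, Polynomial.eval_X, mul_one, map_add, hC]

lemma genericLine_injective (c : σ → k) : Function.Injective (genericLine c) := by
  have hshift : Function.LeftInverse (aeval fun i => X i - C (c i) : MvPolynomial σ k →ₐ[k] _)
      (aeval fun i => C (c i) + X i : MvPolynomial σ k →ₐ[k] MvPolynomial σ k) := fun f => by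
    have h : (aeval fun i => X i - C (c i) : MvPolynomial σ k →ₐ[k] MvPolynomial σ k).comp
        (aeval fun i => C (c i) + X i) = AlgHom.id k _ := algHom_ext fun i => by
      simp [algebraMap_eq]
    exact DFunLike.congr_fun h f
  intro f g hfg
  refine hshift.injective (IsFractionRing.injective _ (FractionRing (MvPolynomial σ k)) ?_)
  rw [← eval_one_genericLine, hfg, eval_one_genericLine]

/-- The order of vanishing at `c` along the generic line through `c`. -/
def lineValuation (c : σ → k) :
    Valuation (FractionRing (MvPolynomial σ k)) (WithZero (Multiplicative ℤ)) :=
  ((Polynomial.idealX (FractionRing (MvPolynomial σ k))).valuation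
    (RatFunc (FractionRing (MvPolynomial σ k)))).comap
    (IsFractionRing.lift (A := MvPolynomial σ k)
      (g := (algebraMap (Polynomial (FractionRing (MvPolynomial σ k))) (RatFunc _)).comp
        (genericLine c).toRingHom)
      ((IsFractionRing.injective _ _).comp (genericLine_injective c)))

lemma lineValuation_algebraMap (c : σ → k) (f : MvPolynomial σ k) :
    lineValuation c (algebraMap _ _ f)
      = (Polynomial.idealX (FractionRing (MvPolynomial σ k))).valuation
        (RatFunc (FractionRing (MvPolynomial σ k)))
        (algebraMap (Polynomial (FractionRing (MvPolynomial σ k))) _ (genericLine c f)) := by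
  rw [lineValuation, Valuation.comap_apply, IsFractionRing.lift_algebraMap]
  rfl

lemma valuation_idealX_eq_one {L : Type*} [Field L] {f : Polynomial L} (hf : f.eval 0 ≠ 0) :
    (Polynomial.idealX L).valuation (RatFunc L) (algebraMap _ _ f) = 1 := by
  rw [IsDedekindDomain.HeightOneSpectrum.valuation_eq_one_iff_notMem, Polynomial.idealX_span,
    Ideal.mem_span_singleton, Polynomial.X_dvd_iff, Polynomial.coeff_zero_eq_eval_zero]
  exact hf

lemma lineValuation_le_one (c : σ → k) (f : MvPolynomial σ k) :
    lineValuation c (algebraMap _ _ f) ≤ 1 := by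
  rw [lineValuation_algebraMap]
  exact IsDedekindDomain.HeightOneSpectrum.valuation_le_one _ _

lemma lineValuation_eq_one {c : σ → k} {f : MvPolynomial σ k} (hf : eval c f ≠ 0) :
    lineValuation c (algebraMap _ _ f) = 1 := by
  rw [lineValuation_algebraMap]
  refine valuation_idealX_eq_one ?_
  rw [eval_zero_genericLine]
  exact (map_ne_zero _).mpr hf

lemma lineValuation_X_sub_C (c : σ → k) (i : σ) :
    lineValuation c (algebraMap _ _ (X i - C (c i))) = WithZero.exp (-1) := by
  rw [lineValuation_algebraMap, map_sub, genericLine_X, genericLine_C, add_sub_cancel_left, map_mul,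
    map_mul, valuation_idealX_eq_one (by simp), one_mul, RatFunc.algebraMap_X,
    Polynomial.valuation_X_eq_neg_one]

lemma lineValuation_algebraMap_le_one (c : σ → k) (r : k) :
    lineValuation c (algebraMap k _ r) ≤ 1 := by
  rw [IsScalarTower.algebraMap_apply k (MvPolynomial σ k)]
  exact lineValuation_le_one c _

lemma finite_setOf_lineValuation_ne_one {ι : Type*} {c : ι → σ → k}
    (hc : ∀ f : MvPolynomial σ k, f ≠ 0 → {j | eval (c j) f = 0}.Finite)
    (x : FractionRing (MvPolynomial σ k)) (hx : x ≠ 0) : {j | lineValuation (c j) x ≠ 1}.Finite := by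
  obtain ⟨f, g, hg, rfl⟩ := IsFractionRing.div_surjective (A := MvPolynomial σ k) x
  have hf : f ≠ 0 := by
    rintro rfl
    simp at hx
  refine ((hc f hf).union (hc g (nonZeroDivisors.ne_zero hg))).subset fun j hj => ?_
  by_contra hnot
  obtain ⟨h1, h2⟩ := not_or.mp hnot
  refine hj ?_
  rw [map_div₀, lineValuation_eq_one h1, lineValuation_eq_one h2, div_one]

lemma algebraMap_X_sub_algebraMap (i : σ) (r : k) :
    algebraMap (MvPolynomial σ k) (FractionRing (MvPolynomial σ k)) (X i) - algebraMap k _ r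
      = algebraMap _ _ (X i - C r) := by
  rw [map_sub, IsScalarTower.algebraMap_apply k (MvPolynomial σ k)]
  rfl

/-- There is a noetherian algebra with a point which is congruent to the `j`-th member of a given
sequence of points modulo a nonunit, for every `j`. -/
theorem exists_isNoetherianRing_forall_dvd {k : Type u} [Field k] {σ : Type} {e : σ}
    {c : ℕ → σ → k} (he : Function.Injective fun j => c j e)
    (hc : ∀ f : MvPolynomial σ k, f ≠ 0 → {j | eval (c j) f = 0}.Finite) :
    ∃ (B : Type u) (_ : CommRing B) (_ : Algebra k B) (q : σ → B), IsNoetherianRing B ∧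
      (∀ j, ¬ IsUnit (q e - algebraMap k B (c j e))) ∧
      ∀ j i, q e - algebraMap k B (c j e) ∣ q i - algebraMap k B (c j i) := by
  obtain ⟨q, hq⟩ : ∃ q : σ → valuationIntersection (fun j => lineValuation (c j))
      fun j => lineValuation_algebraMap_le_one (c j),
      ∀ i, (q i : FractionRing (MvPolynomial σ k)) = algebraMap (MvPolynomial σ k) _ (X i) :=
    ⟨fun i => ⟨algebraMap (MvPolynomial σ k) _ (X i), fun j => lineValuation_le_one (c j) (X i)⟩,
      fun _ => rfl⟩
  refine ⟨_, _, _, q, isNoetherianRing_valuationIntersection_and_forall_dvd he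
    (fun j i => ?_) (fun j l hjl => ?_) (finite_setOf_lineValuation_ne_one hc)⟩
  · rw [hq, algebraMap_X_sub_algebraMap]
    exact lineValuation_X_sub_C (c j) i
  · rw [hq, algebraMap_X_sub_algebraMap]
    refine lineValuation_eq_one ?_
    simpa [sub_eq_zero] using fun h => hjl (he h)

end CurveValuation
section Assembly

lemma finite_setOf_eval_pow_eq_zero {F₀ k : Type*} [Field F₀] [Field k] [Algebra F₀ k] {t : ℕ}
    {p : Fin t → k} (hp : AlgebraicIndependent F₀ p) {f : MvPolynomial (Fin t) k} (hf : f ≠ 0) :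
    {n : ℕ | eval (fun i => p i ^ n) f = 0}.Finite := by
  obtain ⟨a₀, ha₀⟩ := support_nonempty.mpr hf
  refine (finite_setOf_sum_mul_aeval_monomial_eq_zero hp f.support id (Set.injOn_id _)
    (fun a => coeff a f) ⟨a₀, ha₀, mem_support_iff.mp ha₀⟩).subset fun n hn => ?_
  simp only [Set.mem_ofPred_eq] at hn ⊢
  rw [← hn, eval_eq']
  refine Finset.sum_congr rfl fun a _ => ?_
  congr 1
  rw [aeval_monomial, map_one, one_mul, Finsupp.prod_fintype _ _ (by simp)]
  simp [pow_mul]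

lemma Transcendental.pow_ne_one {F₀ k : Type*} [Field F₀] [Field k] [Algebra F₀ k] {x : k}
    (hx : Transcendental F₀ x) {n : ℕ} (hn : n ≠ 0) : x ^ n ≠ 1 := fun h =>
  hx.pow (Nat.pos_of_ne_zero hn) (h ▸ isAlgebraic_one)

lemma injective_zpow_of_pow_ne_one {k : Type*} [Field k] {x : k} (hx0 : x ≠ 0)
    (hx : ∀ n : ℕ, n ≠ 0 → x ^ n ≠ 1) : Function.Injective fun n : ℤ => x ^ n := by
  intro a b hab
  by_contra hne
  have h1 : x ^ (a - b) = 1 := by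
    rw [zpow_sub₀ hx0, div_eq_one_iff_eq (zpow_ne_zero b hx0)]
    exact hab
  rcases Int.natAbs_eq (a - b) with h | h
  · rw [h, zpow_natCast] at h1
    exact hx _ (by omega) h1
  · rw [h, zpow_neg, inv_eq_one, zpow_natCast] at h1
    exact hx _ (by omega) h1

end Assembly

/-- the algebra generated by `t ≥ 2` generic Eulerian derivatives is
noetherian but not strongly noetherian. -/
theorem stmt_2 {k : Type u} [Field k] [IsAlgClosed k]
    (t : ℕ) (ht : 2 ≤ t) (p : Fin t → k)
    (hp : AlgebraicIndependent (⊥ : Subfield k) p)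
    (D : Fin t → Module.End k (LaurentPolynomial k))
    (hD : ∀ i, ∀ n : ℤ, D i (LaurentPolynomial.T n)
        = ((p i ^ n - 1) / (p i - 1)) • LaurentPolynomial.T (n - 1)) :
    IsNoetherianRing (Algebra.adjoin k (Set.range D)) ∧
    IsNoetherianRing (↥(Algebra.adjoin k (Set.range D)))ᵐᵒᵖ ∧
    ∃ (B : Type u) (_ : CommRing B) (_ : Algebra k B), IsNoetherianRing B ∧
      ¬ IsNoetherianRing (TensorProduct k (Algebra.adjoin k (Set.range D)) B) := by
  have hpow : ∀ i (n : ℕ), n ≠ 0 → p i ^ n ≠ 1 := fun i n => (hp.transcendental i).pow_ne_one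
  have hp0 : ∀ i, p i ≠ 0 := fun i => hp.ne_zero i
  have hp0' : ∀ i, consOne p i ≠ 0 := fun i => i.rec one_ne_zero hp0
  have hinj : ∀ i, Function.Injective fun n : ℤ => p i ^ n := fun i =>
    injective_zpow_of_pow_ne_one (hp0 i) (hpow i)
  obtain ⟨Ψ, hΨ⟩ := exists_isTwistedRealization_adjoin hp0
    (fun i => by simpa using hpow i 1 one_ne_zero)
    (fun F hF m hm => finite_setOf_eval_orbitPoint_natCast hp hF hm) hD
  let e : Fin t := ⟨0, by omega⟩
  let e' : Fin t := ⟨1, by omega⟩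
  obtain ⟨B, hB, hkB, q, hBN, hunit, hdvd⟩ := exists_isNoetherianRing_forall_dvd (e := e)
    (c := fun (j : ℕ) i => p i ^ j)
    (fun a b hab => Nat.cast_injective (hinj e (by simpa using hab)))
    (fun f hf => finite_setOf_eval_pow_eq_zero hp hf)
  refine ⟨hΨ.isNoetherianRing hp0' rfl (e := some e) (hinj e)
      fun F hF m hm => finite_setOf_eval_orbitPoint_natCast hp hF hm,
    hΨ.isNoetherianRing_mulOpposite hp0' rfl (e := some e) (hinj e)
      fun F hF m hm => finite_setOf_eval_orbitPoint_neg hp hF hm,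
    B, hB, hkB, hBN, hΨ.not_isNoetherianRing_tensorProduct hp0' rfl (e := some e)
      (e' := some e') (by simp) (by simp [e, e']) (hpow e) (q := fun i => i.elim 1 q) rfl hunit
      fun j i => ?_⟩
  cases i with
  | none => simp [consOne]
  | some i => exact hdvd j i
end
end

section
/- Let t ≥ 2 and let p_1, …, p_t ∈ k be algebraically independent over the prime subfield of k. Let A be the k-subalgebra of End_k(k[Y,Y⁻¹]) generated by the Eulerian derivatives D_{p_1}, …, D_{p_t}. For i ∈ ℕ set c_i = (p_1^i, …, p_t^i) ∈ k^t (these points have pairwise distinct first coordinates p_1^i), and let B be the infinite blowup of 𝔸^t at the sequence (c_i): the k-subalgebra of the rational function field k(y_1,…,y_t) generated by y_1,…,y_t together with all elements (y_j − p_j^i)·(y_1 − p_1^i)^{−1} for 2 ≤ j ≤ t and i ∈ ℕ. Then the tensor product A ⊗_k B is not a left noetherian ring. -/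
set_option synthInstance.maxHeartbeats 1000000
set_option maxHeartbeats 4000000
set_option maxSynthPendingDepth 3

noncomputable section

namespace EulerianBlowup

open MvPolynomial

section Specialization

variable {k : Type*} [Field k] {t : ℕ}

/-- The affine line through `c` in the direction of the coordinate `z`, as a map of coordinate
rings. -/
def line (z : Fin t) (c : Fin t → k) : MvPolynomial (Fin t) k →ₐ[k] Polynomial k :=
  MvPolynomial.aeval fun j => Polynomial.C (c j) + if j = z then Polynomial.X else 0

/-- Pairs `(f, v)` such that the restriction of the rational function `f` to the line through `c`
in the direction of the coordinate `z` takes the value `v` at `c`. -/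
def lineGraph (z : Fin t) (c : Fin t → k) :
    Subalgebra k (FractionRing (MvPolynomial (Fin t) k) × k) where
  carrier := {x | ∃ (N M : MvPolynomial (Fin t) k) (a : ℕ) (n d : Polynomial k),
    x.1 * algebraMap _ _ M = algebraMap _ _ N ∧ line z c N = Polynomial.X ^ a * n ∧
    line z c M = Polynomial.X ^ a * d ∧ d.eval 0 ≠ 0 ∧ n.eval 0 = x.2 * d.eval 0}
  mul_mem' := by
    rintro ⟨f, v⟩ ⟨g, w⟩ ⟨N, M, a, n, d, h1, h2, h3, h4, h5⟩
      ⟨N', M', a', n', d', h1', h2', h3', h4', h5'⟩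
    refine ⟨N * N', M * M', a + a', n * n', d * d', ?_, ?_, ?_, ?_, ?_⟩
    · simp only [Prod.mk_mul_mk, map_mul, ← h1, ← h1']; ring
    · rw [map_mul, h2, h2']; ring
    · rw [map_mul, h3, h3']; ring
    · simpa using ⟨h4, h4'⟩
    · simp only [Prod.mk_mul_mk, Polynomial.eval_mul, h5, h5']; ring
  add_mem' := by
    rintro ⟨f, v⟩ ⟨g, w⟩ ⟨N, M, a, n, d, h1, h2, h3, h4, h5⟩
      ⟨N', M', a', n', d', h1', h2', h3', h4', h5'⟩
    refine ⟨N * M' + N' * M, M * M', a + a', n * d' + n' * d, d * d', ?_, ?_, ?_, ?_, ?_⟩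
    · simp only [Prod.mk_add_mk, map_mul, map_add, ← h1, ← h1']; ring
    · rw [map_add, map_mul, map_mul, h2, h2', h3, h3']; ring
    · rw [map_mul, h3, h3']; ring
    · simpa using ⟨h4, h4'⟩
    · simp only [Prod.mk_add_mk, Polynomial.eval_mul, Polynomial.eval_add, h5, h5']; ring
  algebraMap_mem' r := by
    refine ⟨C r, 1, 0, Polynomial.C r, 1, ?_, ?_, ?_, ?_, ?_⟩
    · simp only [map_one, mul_one, Prod.algebraMap_apply]
      rw [IsScalarTower.algebraMap_apply k (MvPolynomial (Fin t) k), algebraMap_eq]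
    · simp [line]
    · simp
    · simp
    · simp

lemma eq_zero_of_mem_lineGraph {z : Fin t} {c : Fin t → k} {v : k}
    (h : ((0 : FractionRing (MvPolynomial (Fin t) k)), v) ∈ lineGraph z c) : v = 0 := by
  obtain ⟨N, M, a, n, d, h1, h2, h3, h4, h5⟩ := h
  have hN : N = 0 := by
    apply IsFractionRing.injective (MvPolynomial (Fin t) k) (FractionRing (MvPolynomial (Fin t) k))
    simpa using h1.symm
  have hn : n = 0 := by
    rw [hN, map_zero] at h2
    simpa using h2.symm
  rw [hn] at h5
  simpa [h4] using h5.symm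

/-- The subalgebra generated by rational functions having a value at `c` along the line in the
direction of `z` admits a `k`-point with these values. -/
lemma exists_specialization (z : Fin t) (c : Fin t → k)
    (s : Set (FractionRing (MvPolynomial (Fin t) k)))
    (hs : ∀ f ∈ s, ∃ v, (f, v) ∈ lineGraph z c) :
    ∃ e : Algebra.adjoin k s →ₐ[k] k, ∀ f : Algebra.adjoin k s, (f.1, e f) ∈ lineGraph z c := by
  let q : lineGraph z c →ₐ[k] FractionRing (MvPolynomial (Fin t) k) :=
    (AlgHom.fst k _ _).comp (lineGraph z c).val
  have hq : Function.Injective q := by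
    rw [injective_iff_map_eq_zero]
    rintro ⟨⟨f, v⟩, h⟩ hf
    have hf0 : f = 0 := hf
    subst hf0
    have := eq_zero_of_mem_lineGraph h
    subst this
    rfl
  have hle : Algebra.adjoin k s ≤ q.range := by
    refine Algebra.adjoin_le fun f hf => ?_
    obtain ⟨v, hv⟩ := hs f hf
    exact ⟨⟨(f, v), hv⟩, rfl⟩
  let r : Algebra.adjoin k s →ₐ[k] lineGraph z c :=
    (AlgEquiv.ofInjective q hq).symm.toAlgHom.comp (Subalgebra.inclusion hle)
  have hr : ∀ f : Algebra.adjoin k s, (r f).1.1 = f.1 := fun f =>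
    congrArg Subtype.val ((AlgEquiv.ofInjective q hq).apply_symm_apply (Subalgebra.inclusion hle f))
  refine ⟨((AlgHom.snd k _ _).comp (lineGraph z c).val).comp r, fun f => ?_⟩
  rw [← hr f]
  exact (r f).2

lemma mem_lineGraph_X (z : Fin t) (c : Fin t → k) (j : Fin t) :
    (algebraMap (MvPolynomial (Fin t) k) (FractionRing (MvPolynomial (Fin t) k)) (X j), c j) ∈
      lineGraph z c := by
  refine ⟨X j, 1, 0, Polynomial.C (c j) + if j = z then Polynomial.X else 0, 1, ?_, ?_, ?_, ?_, ?_⟩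
  · simp
  · simp [line]
  · simp
  · simp
  · split_ifs <;> simp

lemma exists_mem_lineGraph_slope {z : Fin t} {c d : Fin t → k} {j : Fin t} (hj : j ≠ z)
    (h : d = c ∨ d z ≠ c z) :
    ∃ v, ((algebraMap (MvPolynomial (Fin t) k) (FractionRing (MvPolynomial (Fin t) k)) (X j) -
        algebraMap k _ (d j)) *
      (algebraMap (MvPolynomial (Fin t) k) (FractionRing (MvPolynomial (Fin t) k)) (X z) -
        algebraMap k _ (d z))⁻¹, v) ∈ lineGraph z c := by
  have hC : ∀ a : k, algebraMap k (FractionRing (MvPolynomial (Fin t) k)) a =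
      algebraMap (MvPolynomial (Fin t) k) _ (C a) := fun a => by
    rw [IsScalarTower.algebraMap_apply k (MvPolynomial (Fin t) k), algebraMap_eq]
  have hl : ∀ i, line z c (X i - C (d i)) =
      Polynomial.C (c i - d i) + if i = z then Polynomial.X else 0 := fun i => by
    simp only [line, map_sub, aeval_X, aeval_C, Polynomial.algebraMap_eq]; ring
  have hlz : line z c (X z - C (d z)) ≠ 0 := by
    rw [hl, if_pos rfl, add_comm]
    exact Polynomial.X_add_C_ne_zero _
  have hne : algebraMap (MvPolynomial (Fin t) k) (FractionRing (MvPolynomial (Fin t) k))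
      (X z - C (d z)) ≠ 0 := by
    intro h0
    rw [map_eq_zero_iff _ (IsFractionRing.injective _ _)] at h0
    exact hlz (by rw [h0, map_zero])
  simp only [hC, ← map_sub]
  rcases h with rfl | h
  · refine ⟨0, X j - C (d j), X z - C (d z), 1, 0, 1, ?_, ?_, ?_, ?_, ?_⟩
    · exact inv_mul_cancel_right₀ hne _
    · rw [hl]; simp [hj]
    · rw [hl]; simp
    · simp
    · simp
  · refine ⟨(c j - d j) / (c z - d z), X j - C (d j), X z - C (d z), 0,
      Polynomial.C (c j - d j), Polynomial.C (c z - d z) + Polynomial.X, ?_, ?_, ?_, ?_, ?_⟩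
    · exact inv_mul_cancel_right₀ hne _
    · rw [hl]; simp [hj]
    · rw [hl]; simp
    · simpa using sub_ne_zero.2 h.symm
    · have := sub_ne_zero.2 h.symm
      simp only [Polynomial.eval_C, Polynomial.eval_add, Polynomial.eval_X, add_zero]
      field_simp

end Specialization

section Density

variable {k : Type*} [Field k] {t : ℕ} {p : Fin t → k}

lemma prod_pow_injective (hp : AlgebraicIndependent (⊥ : Subfield k) p) :
    Function.Injective fun α : Fin t →₀ ℕ => ∏ i, p i ^ α i := by
  intro α β h
  have key : ∀ γ : Fin t →₀ ℕ,
      aeval p (monomial γ (1 : (⊥ : Subfield k))) = ∏ i, p i ^ γ i := fun γ => by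
    rw [aeval_monomial, map_one, one_mul, Finsupp.prod_fintype _ _ (by simp)]
  have h' : monomial α (1 : (⊥ : Subfield k)) = monomial β 1 :=
    hp (by rw [key, key]; exact h)
  exact monomial_left_injective one_ne_zero h'

lemma pow_injective (hp : AlgebraicIndependent (⊥ : Subfield k) p) (i : Fin t) :
    Function.Injective fun n : ℕ => p i ^ n := by
  intro m n h
  have key : ∀ n : ℕ, ∏ j, p j ^ (Finsupp.single i n) j = p i ^ n := fun n => by
    rw [Finset.prod_eq_single i] <;> simp +contextual [eq_comm]
  exact Finsupp.single_injective i (prod_pow_injective hp (by simpa only [key] using h))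

/-- The points `(p₁ⁿ, …, p_tⁿ)` are Zariski dense. -/
lemma eq_zero_of_eval_pow (hp : AlgebraicIndependent (⊥ : Subfield k) p)
    (F : MvPolynomial (Fin t) k) (hF : ∀ n : ℕ, eval (fun i => p i ^ n) F = 0) : F = 0 := by
  let χ : (Fin t →₀ ℕ) → (Multiplicative ℕ →* k) := fun α => powersHom k (∏ i, p i ^ α i)
  have hχ : Function.Injective χ := (powersHom k).injective.comp (prod_pow_injective hp)
  have hli := (linearIndependent_monoidHom (Multiplicative ℕ) k).comp χ hχ
  have h0 := linearIndependent_iff'.1 hli F.support (fun α => F.coeff α) (by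
    funext n
    have := hF n.toAdd
    rw [eval_eq'] at this
    simp only [Finset.sum_apply, Pi.smul_apply, Function.comp_apply, smul_eq_mul, Pi.zero_apply]
    rw [← this]
    refine Finset.sum_congr rfl fun α _ => ?_
    simp only [χ, powersHom_apply, ← Finset.prod_pow, ← pow_mul, mul_comm])
  ext α
  by_cases hα : α ∈ F.support
  · exact h0 α hα
  · simpa using hα

end Density

section Generic

variable {k : Type*} [Field k] {t : ℕ}

/-- The coefficient of the generic Eulerian derivative. -/
def coef (p : Fin t → k) (i : Fin t) (n : ℤ) : MvPolynomial (Fin t) k :=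
  C (p i - 1)⁻¹ * (C (p i ^ n) * X i - 1)

/-- The generic Eulerian derivative: on sequences of polynomials, with `p i ^ n` deformed to
`p i ^ n * X i`. -/
def genD (p : Fin t → k) (i : Fin t) : Module.End k (ℤ → MvPolynomial (Fin t) k) where
  toFun f n := coef p i (n + 1) * f (n + 1)
  map_add' f g := by funext n; simp [mul_add]
  map_smul' c f := by funext n; simp

@[simp] lemma genD_apply (p : Fin t → k) (i : Fin t) (f : ℤ → MvPolynomial (Fin t) k) (n : ℤ) :
    genD p i f n = coef p i (n + 1) * f (n + 1) := rfl

lemma genD_single (p : Fin t → k) (i : Fin t) (n : ℤ) (G : MvPolynomial (Fin t) k) :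
    genD p i (Pi.single n G) = Pi.single (n - 1) (coef p i n * G) := by
  funext l
  rw [genD_apply]
  rcases eq_or_ne l (n - 1) with rfl | h
  · simp
  · rw [Pi.single_eq_of_ne h, Pi.single_eq_of_ne (by omega), mul_zero]

lemma eval_one_coef (p : Fin t → k) (i : Fin t) (n : ℤ) :
    eval 1 (coef p i n) = (p i - 1)⁻¹ * (p i ^ n - 1) := by
  simp [coef]

/-- The action of the free algebra through the generic Eulerian derivatives. -/
def genAct (p : Fin t → k) :
    FreeAlgebra k (Fin t) →ₐ[k] Module.End k (ℤ → MvPolynomial (Fin t) k) :=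
  FreeAlgebra.lift k (genD p)

variable {p : Fin t → k} {D : Fin t → Module.End k (LaurentPolynomial k)}

lemma coeff_eulerian
    (hD : ∀ i, ∀ n : ℤ, D i (LaurentPolynomial.T n)
        = ((p i ^ n - 1) / (p i - 1)) • LaurentPolynomial.T (n - 1))
    (i : Fin t) (f : LaurentPolynomial k) (n : ℤ) :
    (D i f).coeff n = ((p i ^ (n + 1) - 1) / (p i - 1)) * f.coeff (n + 1) := by
  induction f using LaurentPolynomial.induction_on' with
  | add f g hf hg => simp [hf, hg, mul_add]
  | C_mul_T m a =>
    rw [← LaurentPolynomial.smul_eq_C_mul, map_smul, hD]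
    simp only [AddMonoidAlgebra.coeff_smul, Finsupp.smul_apply, LaurentPolynomial.T_apply,
      smul_eq_mul]
    by_cases h : m = n + 1
    · simp [h, mul_comm]
    · rw [if_neg h, if_neg (by omega)]
      simp

lemma specialize_genAct (hp0 : ∀ i, p i ≠ 0)
    (hD : ∀ i, ∀ n : ℤ, D i (LaurentPolynomial.T n)
        = ((p i ^ n - 1) / (p i - 1)) • LaurentPolynomial.T (n - 1))
    (N : ℕ) (w : FreeAlgebra k (Fin t)) (f : LaurentPolynomial k)
    (g : ℤ → MvPolynomial (Fin t) k)
    (hfg : ∀ n : ℤ, f.coeff (n + N) = eval (fun i => p i ^ N) (g n)) (n : ℤ) :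
    (FreeAlgebra.lift k D w f).coeff (n + N) = eval (fun i => p i ^ N) (genAct p w g n) := by
  induction w using FreeAlgebra.induction generalizing f g n with
  | grade0 r => simp [Module.algebraMap_end_apply, hfg]
  | grade1 i =>
    have h1 : (n : ℤ) + N + 1 = (n + 1) + N := by ring
    simp only [genAct, FreeAlgebra.lift_ι_apply, genD_apply, coeff_eulerian hD, map_mul, h1, hfg]
    congr 1
    rw [zpow_add₀ (hp0 i), zpow_natCast]
    simp [coef, div_eq_inv_mul]
  | mul a b ha hb =>
    simp only [map_mul, Module.End.mul_apply]
    exact ha _ _ (fun n => hb _ _ hfg n) n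
  | add a b ha hb =>
    simp [ha _ _ hfg, hb _ _ hfg]

/-- Relations between Eulerian derivatives hold for the generic ones. -/
lemma genAct_single_eq_zero (hp : AlgebraicIndependent (⊥ : Subfield k) p) (hp0 : ∀ i, p i ≠ 0)
    (hD : ∀ i, ∀ n : ℤ, D i (LaurentPolynomial.T n)
        = ((p i ^ n - 1) / (p i - 1)) • LaurentPolynomial.T (n - 1))
    {w : FreeAlgebra k (Fin t)} (hw : FreeAlgebra.lift k D w = 0) (m : ℤ) :
    genAct p w (Pi.single m 1) = 0 := by
  funext n
  refine eq_zero_of_eval_pow hp _ fun N => ?_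
  rw [← specialize_genAct hp0 hD N w (LaurentPolynomial.T (m + N)) (Pi.single m 1) ?_ n, hw]
  · simp
  · intro n
    by_cases h : m = n
    · simp [h]
    · simp [h]

/-- Sequences vanishing at the point `1`, to second order in the direction `j` at negative
indices. -/
def vanishing (j : Fin t) : Submodule k (ℤ → MvPolynomial (Fin t) k) where
  carrier := {f | (∀ n, eval 1 (f n) = 0) ∧ ∀ n < 0, eval 1 (pderiv j (f n)) = 0}
  add_mem' := by
    rintro f g ⟨h1, h2⟩ ⟨h3, h4⟩
    exact ⟨fun n => by simp [h1, h3], fun n hn => by simp [h2 n hn, h4 n hn]⟩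
  zero_mem' := ⟨fun n => by simp, fun n _ => by simp⟩
  smul_mem' := by
    rintro c f ⟨h1, h2⟩
    exact ⟨fun n => by simp [h1], fun n hn => by simp [h2 n hn]⟩

lemma genAct_mem_vanishing (j : Fin t) (w : FreeAlgebra k (Fin t))
    {f : ℤ → MvPolynomial (Fin t) k} (hf : f ∈ vanishing j) : genAct p w f ∈ vanishing j := by
  induction w using FreeAlgebra.induction generalizing f with
  | grade0 r =>
    rw [AlgHom.commutes, Module.algebraMap_end_apply]
    exact Submodule.smul_mem _ _ hf
  | grade1 i =>
    obtain ⟨h1, h2⟩ := hf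
    simp only [genAct, FreeAlgebra.lift_ι_apply]
    refine ⟨fun n => by simp [h1], fun n hn => ?_⟩
    rw [genD_apply, Derivation.leibniz]
    simp only [smul_eq_mul, map_add, map_mul, h1, zero_mul, add_zero]
    rcases (show n + 1 < 0 ∨ n + 1 = 0 by omega) with h | h
    · simp [h2 _ h]
    · simp [h, eval_one_coef]
  | mul a b ha hb =>
    rw [map_mul]
    exact ha (hb hf)
  | add a b ha hb =>
    rw [map_add]
    exact Submodule.add_mem _ (ha hf) (hb hf)

lemma genAct_pow_single (i : Fin t) (hpi : Function.Injective fun n : ℕ => p i ^ n) (m : ℕ)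
    (l : ℕ) (hl : l ≤ m) : ∃ G : MvPolynomial (Fin t) k, eval 1 G ≠ 0 ∧
      genAct p (FreeAlgebra.ι k i ^ l) (Pi.single (m : ℤ) 1) = Pi.single ((m : ℤ) - l) G := by
  induction l with
  | zero => exact ⟨1, by simp⟩
  | succ l ih =>
    obtain ⟨G, hG, h⟩ := ih (by omega)
    refine ⟨coef p i ((m : ℤ) - l) * G, ?_, ?_⟩
    · rw [map_mul, eval_one_coef]
      have h1 : p i ≠ 1 := fun h => one_ne_zero (hpi (a₁ := 1) (a₂ := 0) (by simp [h]))
      have h2 : p i ^ ((m : ℤ) - l) ≠ 1 := by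
        rw [← Nat.cast_sub (by omega), zpow_natCast]
        intro h
        have := hpi (a₁ := m - l) (a₂ := 0) (by simpa using h)
        omega
      exact mul_ne_zero (mul_ne_zero (inv_ne_zero (sub_ne_zero.2 h1)) (sub_ne_zero.2 h2)) hG
    · rw [pow_succ', map_mul, Module.End.mul_apply, h]
      simp only [genAct, FreeAlgebra.lift_ι_apply, genD_single]
      push_cast
      congr 1
      ring

/-- `p_jˡ (p_j - 1) X_j X_iˡ - β p_iˡ (p_i - 1) X_i X_iˡ` in the free algebra. -/
def rel (p : Fin t → k) (i j : Fin t) (l : ℕ) (β : k) : FreeAlgebra k (Fin t) :=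
  (p j ^ l * (p j - 1)) • (FreeAlgebra.ι k j * FreeAlgebra.ι k i ^ l) -
    (β * (p i ^ l * (p i - 1))) • (FreeAlgebra.ι k i * FreeAlgebra.ι k i ^ l)

lemma genAct_rel {i j : Fin t} (hpi : Function.Injective fun n : ℕ => p i ^ n) {m l : ℕ}
    (hl : l ≤ m) (β : k) : ∃ G : MvPolynomial (Fin t) k, eval 1 G ≠ 0 ∧
      genAct p (rel p i j l β) (Pi.single (m : ℤ) 1) = Pi.single ((m : ℤ) - l - 1)
        (((p j ^ l * (p j - 1)) • coef p j ((m : ℤ) - l) -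
          (β * (p i ^ l * (p i - 1))) • coef p i ((m : ℤ) - l)) * G) := by
  obtain ⟨G, hG, h⟩ := genAct_pow_single i hpi m l hl
  refine ⟨G, hG, ?_⟩
  simp only [rel, map_sub, map_smul, map_mul, LinearMap.sub_apply, LinearMap.smul_apply,
    Module.End.mul_apply, h]
  simp only [genAct, FreeAlgebra.lift_ι_apply, genD_single]
  rw [sub_mul, Pi.single_sub, smul_mul_assoc, smul_mul_assoc, Pi.single_smul, Pi.single_smul]

lemma genAct_rel_mem {i j : Fin t} (hpi : Function.Injective fun n : ℕ => p i ^ n)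
    (hpj : Function.Injective fun n : ℕ => p j ^ n) {m l : ℕ} (hl : l < m) {β : k}
    (hβ : β * (p i ^ m - p i ^ l) = p j ^ m - p j ^ l) :
    genAct p (rel p i j l β) (Pi.single (m : ℤ) 1) ∈ vanishing j := by
  obtain ⟨G, -, h⟩ := genAct_rel (j := j) hpi hl.le β
  rw [h]
  have h1 : ∀ i : Fin t, Function.Injective (fun n : ℕ => p i ^ n) → p i - 1 ≠ 0 := fun i hi =>
    sub_ne_zero.2 fun h => one_ne_zero (hi (a₁ := 1) (a₂ := 0) (by simp [h]))
  have h2 : ∀ i : Fin t, (p i - 1) ≠ 0 →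
      p i ^ l * (p i - 1) * ((p i - 1)⁻¹ * (p i ^ ((m : ℤ) - l) - 1)) = p i ^ m - p i ^ l := by
    intro i hi
    rw [← Nat.cast_sub hl.le, zpow_natCast]
    have : p i ^ m = p i ^ l * p i ^ (m - l) := by rw [← pow_add]; congr 1; omega
    rw [this]
    field_simp
  refine ⟨fun n => ?_, fun n hn => ?_⟩
  · rcases eq_or_ne n ((m : ℤ) - l - 1) with rfl | hn
    · rw [Pi.single_eq_same, map_mul, map_sub, smul_eval, smul_eval, eval_one_coef, eval_one_coef,
        mul_assoc β, h2 i (h1 i hpi), h2 j (h1 j hpj), hβ, sub_self, zero_mul]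
    · simp [Pi.single_eq_of_ne hn]
  · rw [Pi.single_eq_of_ne (by omega)]
    simp

lemma genAct_rel_notMem {i j : Fin t} (hij : i ≠ j)
    (hpi : Function.Injective fun n : ℕ => p i ^ n)
    (hpj : Function.Injective fun n : ℕ => p j ^ n) (hp0 : p j ≠ 0) (m : ℕ) (β : k) :
    genAct p (rel p i j m β) (Pi.single (m : ℤ) 1) ∉ vanishing j := by
  obtain ⟨G, hG, h⟩ := genAct_rel (j := j) hpi le_rfl β
  rw [h]
  rintro ⟨-, h2⟩
  have h3 := h2 (-1) (by norm_num)
  have h1 : p j - 1 ≠ 0 :=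
    sub_ne_zero.2 fun h => one_ne_zero (hpj (a₁ := 1) (a₂ := 0) (by simp [h]))
  rw [show (m : ℤ) - m - 1 = -1 by ring, Pi.single_eq_same, Derivation.leibniz] at h3
  simp [coef, pderiv_X, hij, hG, hp0, h1] at h3

end Generic

section Tensor

open scoped TensorProduct

variable {k : Type*} [Field k] {t : ℕ} {p : Fin t → k}
  {D : Fin t → Module.End k (LaurentPolynomial k)}

/-- The tautological map from the free algebra to the algebra generated by the `D i`. -/
def toAdjoin (D : Fin t → Module.End k (LaurentPolynomial k)) :
    FreeAlgebra k (Fin t) →ₐ[k] Algebra.adjoin k (Set.range D) :=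
  FreeAlgebra.lift k fun i => ⟨D i, Algebra.subset_adjoin ⟨i, rfl⟩⟩

lemma coe_toAdjoin (w : FreeAlgebra k (Fin t)) :
    (toAdjoin D w : Module.End k (LaurentPolynomial k)) = FreeAlgebra.lift k D w := by
  have : (Algebra.adjoin k (Set.range D)).val.comp (toAdjoin D) = FreeAlgebra.lift k D := by
    ext i
    simp [toAdjoin]
  exact DFunLike.congr_fun this w

lemma toAdjoin_surjective : Function.Surjective (toAdjoin D) := by
  rintro ⟨a, ha⟩
  rw [Algebra.adjoin_range_eq_range_freeAlgebra_lift] at ha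
  obtain ⟨w, hw⟩ := ha
  exact ⟨w, Subtype.ext ((coe_toAdjoin w).trans hw)⟩

/-- The left ideal of the operators sending the `m`-th basis sequence to a vanishing sequence. -/
def vanishingIdeal (p : Fin t → k) (D : Fin t → Module.End k (LaurentPolynomial k)) (j : Fin t)
    (m : ℕ) : Ideal (Algebra.adjoin k (Set.range D)) where
  carrier := {a | ∃ w, toAdjoin D w = a ∧ genAct p w (Pi.single (m : ℤ) 1) ∈ vanishing j}
  add_mem' := by
    rintro _ _ ⟨v, rfl, hv⟩ ⟨w, rfl, hw⟩
    exact ⟨v + w, map_add _ _ _, by rw [map_add]; exact Submodule.add_mem _ hv hw⟩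
  zero_mem' := ⟨0, map_zero _, by rw [map_zero]; exact Submodule.zero_mem _⟩
  smul_mem' := by
    rintro a _ ⟨w, rfl, hw⟩
    obtain ⟨v, rfl⟩ := toAdjoin_surjective a
    exact ⟨v * w, map_mul _ _ _, by rw [map_mul]; exact genAct_mem_vanishing j v hw⟩

lemma toAdjoin_mem_vanishingIdeal (hp : AlgebraicIndependent (⊥ : Subfield k) p)
    (hp0 : ∀ i, p i ≠ 0)
    (hD : ∀ i, ∀ n : ℤ, D i (LaurentPolynomial.T n)
        = ((p i ^ n - 1) / (p i - 1)) • LaurentPolynomial.T (n - 1))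
    (j : Fin t) (m : ℕ) (w : FreeAlgebra k (Fin t)) :
    toAdjoin D w ∈ vanishingIdeal p D j m ↔
      genAct p w (Pi.single (m : ℤ) 1) ∈ vanishing j := by
  refine ⟨?_, fun h => ⟨w, rfl, h⟩⟩
  rintro ⟨v, hv, h⟩
  have h0 : FreeAlgebra.lift k D (w - v) = 0 := by
    rw [← coe_toAdjoin, map_sub, hv, sub_self]
    rfl
  have h1 := genAct_single_eq_zero hp hp0 hD h0 m
  rw [map_sub, LinearMap.sub_apply, sub_eq_zero] at h1
  rwa [h1]

/-- The tensor product is not left noetherian if `B` has a sequence of points with values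
prescribed by the slopes between the points `(p_iᵐ, p_jᵐ)`. -/
lemma not_isNoetherianRing_tensor (hp : AlgebraicIndependent (⊥ : Subfield k) p)
    (hD : ∀ i, ∀ n : ℤ, D i (LaurentPolynomial.T n)
        = ((p i ^ n - 1) / (p i - 1)) • LaurentPolynomial.T (n - 1))
    {i j : Fin t} (hij : i ≠ j) {B : Type*} [CommRing B] [Algebra k B] (b : ℕ → B)
    (e : ℕ → B →ₐ[k] k)
    (he : ∀ m l, e m (b l) * (p i ^ m - p i ^ l) = p j ^ m - p j ^ l) :
    ¬ IsNoetherianRing (Algebra.adjoin k (Set.range D) ⊗[k] B) := by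
  intro hN
  have hp0 : ∀ i, p i ≠ 0 := fun i h => by
    have := pow_injective hp i (a₁ := 1) (a₂ := 2) (by simp [h])
    omega
  let κ : ℕ → Algebra.adjoin k (Set.range D) ⊗[k] B := fun l =>
    toAdjoin D ((p j ^ l * (p j - 1)) • (FreeAlgebra.ι k j * FreeAlgebra.ι k i ^ l)) ⊗ₜ 1 -
      toAdjoin D ((p i ^ l * (p i - 1)) • (FreeAlgebra.ι k i * FreeAlgebra.ι k i ^ l)) ⊗ₜ b l
  have hcomm : ∀ m x y, Commute (AlgHom.id k (Algebra.adjoin k (Set.range D)) x)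
      ((Algebra.ofId k (Algebra.adjoin k (Set.range D))).comp (e m) y) := fun m x y =>
    Algebra.commute_algebraMap_right (e m y) x
  let π : ℕ → Algebra.adjoin k (Set.range D) ⊗[k] B →ₐ[k] Algebra.adjoin k (Set.range D) :=
    fun m => Algebra.TensorProduct.lift (AlgHom.id k _) ((Algebra.ofId k _).comp (e m))
      (hcomm m)
  have hπ : ∀ m l, π m (κ l) = toAdjoin D (rel p i j l (e m (b l))) := by
    intro m l
    simp only [π, κ, rel, map_sub, Algebra.TensorProduct.lift_tmul, map_one, mul_one,
      AlgHom.id_apply, AlgHom.comp_apply, Algebra.ofId_apply, mul_smul (e m (b l)), map_smul]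
    congr 1
    rw [← Algebra.commutes, ← Algebra.smul_def]
  let I : ℕ →o Ideal (Algebra.adjoin k (Set.range D) ⊗[k] B) :=
    ⟨fun n => Ideal.span (κ '' {l | l < n}), fun a c h =>
      Ideal.span_mono (Set.image_mono fun l (hl : l < a) => lt_of_lt_of_le hl h)⟩
  obtain ⟨m, hm⟩ := monotone_stabilizes_iff_noetherian.2 hN I
  have hmem : κ m ∈ I m := by
    rw [hm (m + 1) (Nat.le_succ m)]
    exact Ideal.subset_span ⟨m, Nat.lt_succ_self m, rfl⟩
  have hle : I m ≤ (vanishingIdeal p D j m).comap (π m) := by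
    refine Ideal.span_le.2 ?_
    rintro _ ⟨l, hl, rfl⟩
    rw [SetLike.mem_coe, Ideal.mem_comap, hπ, toAdjoin_mem_vanishingIdeal hp hp0 hD]
    exact genAct_rel_mem (pow_injective hp i) (pow_injective hp j) hl (he m l)
  have h := hle hmem
  rw [Ideal.mem_comap, hπ, toAdjoin_mem_vanishingIdeal hp hp0 hD] at h
  exact genAct_rel_notMem hij (pow_injective hp i) (pow_injective hp j) (hp0 j) m _ h

end Tensor

end EulerianBlowup

open EulerianBlowup in
/-- for the algebra `A` generated by `t ≥ 2` Eulerian derivatives with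
parameters algebraically independent over the prime subfield, and `B` the infinite
blowup of `𝔸^t` at the points `cᵢ = (p₁ⁱ, …, p_tⁱ)`, the ring `A ⊗_k B` is not left
noetherian. -/
theorem stmt_3 {k : Type*} [Field k] [IsAlgClosed k]
    (t : ℕ) (ht : 2 ≤ t) (p : Fin t → k)
    (hp : AlgebraicIndependent (⊥ : Subfield k) p)
    (D : Fin t → Module.End k (LaurentPolynomial k))
    (hD : ∀ i, ∀ n : ℤ, D i (LaurentPolynomial.T n)
        = ((p i ^ n - 1) / (p i - 1)) • LaurentPolynomial.T (n - 1)) :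
    ¬ IsNoetherianRing (TensorProduct k
      (Algebra.adjoin k (Set.range D))
      (Algebra.adjoin k
        ((Set.range fun j : Fin t =>
            algebraMap (MvPolynomial (Fin t) k) (FractionRing (MvPolynomial (Fin t) k))
              (MvPolynomial.X j)) ∪
         {x : FractionRing (MvPolynomial (Fin t) k) | ∃ (j : Fin t) (i : ℕ),
            j ≠ ⟨0, by omega⟩ ∧
            x = (algebraMap (MvPolynomial (Fin t) k) (FractionRing (MvPolynomial (Fin t) k))
                    (MvPolynomial.X j) -
                  algebraMap k (FractionRing (MvPolynomial (Fin t) k)) (p j ^ i)) *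
                (algebraMap (MvPolynomial (Fin t) k) (FractionRing (MvPolynomial (Fin t) k))
                    (MvPolynomial.X ⟨0, by omega⟩) -
                  algebraMap k (FractionRing (MvPolynomial (Fin t) k))
                    (p ⟨0, by omega⟩ ^ i))⁻¹}))) := by
  have h01 : (⟨1, by omega⟩ : Fin t) ≠ ⟨0, by omega⟩ := by simp
  have hpt := fun m : ℕ => exists_specialization (⟨0, by omega⟩ : Fin t) (fun i => p i ^ m)
    ((Set.range fun j : Fin t =>
        algebraMap (MvPolynomial (Fin t) k) (FractionRing (MvPolynomial (Fin t) k))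
          (MvPolynomial.X j)) ∪
      {x : FractionRing (MvPolynomial (Fin t) k) | ∃ (j : Fin t) (i : ℕ),
        j ≠ ⟨0, by omega⟩ ∧
        x = (algebraMap (MvPolynomial (Fin t) k) (FractionRing (MvPolynomial (Fin t) k))
                (MvPolynomial.X j) -
              algebraMap k (FractionRing (MvPolynomial (Fin t) k)) (p j ^ i)) *
            (algebraMap (MvPolynomial (Fin t) k) (FractionRing (MvPolynomial (Fin t) k))
                (MvPolynomial.X ⟨0, by omega⟩) -
              algebraMap k (FractionRing (MvPolynomial (Fin t) k))
                (p ⟨0, by omega⟩ ^ i))⁻¹}) (by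
      rintro f (⟨j, rfl⟩ | ⟨j, i, hj, rfl⟩)
      · exact ⟨_, mem_lineGraph_X _ _ j⟩
      · refine exists_mem_lineGraph_slope (d := fun j => p j ^ i) hj ?_
        rcases eq_or_ne i m with rfl | h
        · exact Or.inl rfl
        · exact Or.inr fun h' => h (pow_injective hp _ h'))
  choose e he using hpt
  have heX : ∀ m j, e m ⟨_, Algebra.subset_adjoin (Or.inl ⟨j, rfl⟩)⟩ = p j ^ m := by
    intro m j
    have := Subalgebra.sub_mem _ (he m ⟨_, Algebra.subset_adjoin (Or.inl ⟨j, rfl⟩)⟩)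
      (mem_lineGraph_X ⟨0, by omega⟩ (fun i => p i ^ m) j)
    rw [Prod.mk_sub_mk, sub_self] at this
    exact sub_eq_zero.1 (eq_zero_of_mem_lineGraph this)
  refine not_isNoetherianRing_tensor hp hD h01.symm
    (fun l => ⟨_, Algebra.subset_adjoin (Or.inr ⟨⟨1, by omega⟩, l, h01, rfl⟩)⟩) e ?_
  intro m l
  have hne : algebraMap (MvPolynomial (Fin t) k) (FractionRing (MvPolynomial (Fin t) k))
      (MvPolynomial.X ⟨0, by omega⟩) - algebraMap k _ (p ⟨0, by omega⟩ ^ l) ≠ 0 := by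
    rw [sub_ne_zero, IsScalarTower.algebraMap_apply k (MvPolynomial (Fin t) k)]
    intro h
    have h' := IsFractionRing.injective _ _ h
    simpa [MvPolynomial.algebraMap_eq] using
      congrArg (MvPolynomial.eval fun _ => p ⟨0, by omega⟩ ^ l + 1) h'
  have hsub : ∀ j, p j ^ m - p j ^ l = e m
      (⟨_, Algebra.subset_adjoin (Or.inl ⟨j, rfl⟩)⟩ - algebraMap k _ (p j ^ l)) := fun j => by
    rw [map_sub, heX, AlgHom.commutes, Algebra.algebraMap_self_apply]
  rw [hsub, hsub, ← map_mul]
  exact congrArg (e m) (Subtype.ext (inv_mul_cancel_right₀ hne _))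
end
end

section
/- Let t ≥ 2 and let c_i = (a_{i1}, …, a_{it}) ∈ k^t (i ∈ ℕ) be a sequence of points whose first coordinates a_{i1} are pairwise distinct, and assume the set {c_i : i ∈ ℕ} is critically dense in 𝔸^t, i.e. every nonzero polynomial in k[y_1,…,y_t] vanishes at c_i for only finitely many i. Then the infinite blowup B of 𝔸^t at the sequence (c_i) — the k-subalgebra of the rational function field k(y_1,…,y_t) generated by y_1,…,y_t together with all elements (y_j − a_{ij})·(y_1 − a_{i1})^{−1} for 2 ≤ j ≤ t and i ∈ ℕ — is a noetherian ring and a unique factorization domain. -/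
set_option synthInstance.maxHeartbeats 1000000
set_option maxHeartbeats 4000000
set_option maxSynthPendingDepth 3

noncomputable section

open MvPolynomial

/-- If `T ⊆ D` and every generator `g` can be multiplied into the subalgebra `D` by an element
of `T`, then so can every element of the algebra they generate. -/
theorem Subalgebra.exists_mul_mem_of_mem_adjoin {k B : Type*} [CommRing k] [CommRing B]
    [Algebra k B] (D : Subalgebra k B) (T : Submonoid B) (hT : ∀ s ∈ T, s ∈ D) {G : Set B}
    (hG : ∀ g ∈ G, ∃ s ∈ T, s * g ∈ D) {b : B} (hb : b ∈ Algebra.adjoin k G) :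
    ∃ s ∈ T, s * b ∈ D := by
  induction hb using Algebra.adjoin_induction with
  | mem x hx => exact hG x hx
  | algebraMap r => exact ⟨1, T.one_mem, by simp⟩
  | add x y _ _ hx hy =>
    obtain ⟨s, hs, hsx⟩ := hx
    obtain ⟨u, hu, huy⟩ := hy
    refine ⟨s * u, T.mul_mem hs hu, ?_⟩
    have h := D.add_mem (D.mul_mem (hT u hu) hsx) (D.mul_mem (hT s hs) huy)
    convert h using 1
    ring
  | mul x y _ _ hx hy =>
    obtain ⟨s, hs, hsx⟩ := hx
    obtain ⟨u, hu, huy⟩ := hy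
    refine ⟨s * u, T.mul_mem hs hu, ?_⟩
    convert D.mul_mem hsx huy using 1
    ring

/-- **Nagata's criterion**: a domain `B` with the ascending chain condition on principal ideals
is a UFD if every element of `B` can be multiplied into a subring that is a UFD by a product of
primes of `B` coming from that subring. -/
theorem UniqueFactorizationMonoid.of_nagata {A B : Type*} [CommRing A] [IsDomain A]
    [UniqueFactorizationMonoid A] [CommRing B] [IsDomain B] [WfDvdMonoid B]
    (φ : A →+* B) (hφ : Function.Injective φ) (S : Set A) (hS : ∀ s ∈ S, Prime (φ s))
    (h : ∀ b : B, ∃ s ∈ Submonoid.closure S, ∃ a, φ s * b = φ a) :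
    UniqueFactorizationMonoid B := by
  have hS0 : ∀ s ∈ Submonoid.closure S, φ s ≠ 0 := fun s hs => by
    induction hs using Submonoid.closure_induction with
    | mem s hs => exact (hS s hs).ne_zero
    | one => simp
    | mul a b _ _ ha hb => simpa using ⟨ha, hb⟩
  refine iff_exists_prime_mem_of_isPrime.2 fun P hP hPprime => ?_
  by_cases hSP : ∃ s ∈ S, φ s ∈ P
  · obtain ⟨s, hs, hsP⟩ := hSP
    exact ⟨φ s, hsP, hS s hs⟩
  push Not at hSP
  have hcomap : P.comap φ ≠ ⊥ := by
    obtain ⟨b, hbP, hb⟩ := Submodule.exists_mem_ne_zero_of_ne_bot hP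
    obtain ⟨s, hs, a, ha⟩ := h b
    refine (Submodule.ne_bot_iff _).2 ⟨a, ?_, ?_⟩
    · rw [Ideal.mem_comap, ← ha]
      exact P.mul_mem_left _ hbP
    · rintro rfl
      rw [map_zero] at ha
      exact mul_ne_zero (hS0 s hs) hb ha
  obtain ⟨q, hqP, hq⟩ := Ideal.IsPrime.exists_mem_prime_of_ne_bot
    (Ideal.comap_isPrime φ P) hcomap
  obtain ⟨g, e, hgP, hg, hge⟩ : ∃ g e, g ∈ P ∧ Irreducible g ∧ φ q = g * e := by
    have hq0 : φ q ≠ 0 := (map_ne_zero_iff φ hφ).2 hq.ne_zero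
    obtain ⟨f, hf, u, hfu⟩ := WfDvdMonoid.exists_factors (φ q) hq0
    have hprod : f.prod ∈ P := by
      have h1 : f.prod * u ∈ P := hfu ▸ hqP
      exact (hPprime.mem_or_mem h1).resolve_right fun hu =>
        hPprime.ne_top (Ideal.eq_top_of_isUnit_mem _ hu u.isUnit)
    obtain ⟨g, hgf, hgP⟩ := (hPprime.multiset_prod_mem_iff_exists_mem f).1 hprod
    obtain ⟨e, he⟩ := Multiset.dvd_prod hgf
    exact ⟨g, e * u, hgP, hf g hgf, by rw [← hfu, he, mul_assoc]⟩
  have hcancel : ∀ s ∈ Submonoid.closure S, ∀ b, g ∣ φ s * b → g ∣ b := fun s hs => by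
    induction hs using Submonoid.closure_induction with
    | mem s hs =>
      rintro b ⟨d, hd⟩
      rcases (hS s hs).dvd_or_dvd (Dvd.intro _ hd : φ s ∣ g * d) with ⟨r, hr⟩ | ⟨r, rfl⟩
      · rcases hg.isUnit_or_isUnit hr with hu | hu
        · exact absurd hu (hS s hs).not_isUnit
        · obtain ⟨v, rfl⟩ := hu
          refine absurd ?_ (hSP s hs)
          have h1 : φ s = g * ↑v⁻¹ := by rw [hr, mul_assoc, Units.mul_inv, mul_one]
          rw [h1]
          exact P.mul_mem_right _ hgP
      · exact ⟨r, mul_left_cancel₀ (hS s hs).ne_zero (by rw [hd]; ring)⟩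
    | one => intro b hb; simpa using hb
    | mul a b _ _ ha hb =>
      intro d hd
      rw [map_mul, mul_assoc] at hd
      exact hb _ (ha _ hd)
  refine ⟨g, hgP, hg.ne_zero, hg.not_isUnit, ?_⟩
  rintro a b ⟨d, hd⟩
  obtain ⟨s, hs, a', ha⟩ := h a
  obtain ⟨u, hu, b', hb⟩ := h b
  obtain ⟨v, hv, d', hd'⟩ := h d
  obtain ⟨w, hw, e', he⟩ := h e
  have hdvd : q ∣ e' * (a' * b') * v := by
    refine ⟨w * s * u * d', hφ ?_⟩
    simp only [map_mul, ← ha, ← hb, ← he, ← hd', hge]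
    linear_combination φ w * e * φ s * φ u * φ v * hd
  rcases hq.dvd_or_dvd hdvd with hdvd | ⟨r, rfl⟩
  · rcases hq.dvd_or_dvd hdvd with ⟨r, rfl⟩ | hdvd
    · have h1 : φ w = g * φ r := by
        have he0 : e ≠ 0 := by
          rintro rfl
          exact hq.ne_zero (hφ (by simpa using hge))
        refine mul_right_cancel₀ he0 ?_
        rw [he, map_mul, hge]
        ring
      exact absurd (isUnit_of_dvd_one (hcancel w hw 1 ⟨φ r, by rw [mul_one, h1]⟩)) hg.not_isUnit
    · rcases hq.dvd_or_dvd hdvd with ⟨r, rfl⟩ | ⟨r, rfl⟩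
      · exact Or.inl (hcancel s hs a ⟨e * φ r, by rw [ha, map_mul, hge, mul_assoc]⟩)
      · exact Or.inr (hcancel u hu b ⟨e * φ r, by rw [hb, map_mul, hge, mul_assoc]⟩)
  · refine absurd (isUnit_of_dvd_one (hcancel _ hv 1 ⟨e * φ r, ?_⟩)) hg.not_isUnit
    rw [mul_one, map_mul, hge, mul_assoc]

/-- The algebra `B` is the infinite affine blowup of affine space with coordinates `y` at the
points `c i`: it is generated by the coordinates and by the elements
`z i j = (y j - c i j) / (y o - c i o)` for `j ≠ o`. -/
structure IsInfiniteBlowup {k ι B : Type*} [Field k] [CommRing B] [Algebra k B]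
    (c : ℕ → ι → k) (o : ι) (y : ι → B) (z : ℕ → ι → B) : Prop where
  algebraicIndependent : AlgebraicIndependent k y
  mul_eq : ∀ i, ∀ j ≠ o,
    (y o - algebraMap k B (c i o)) * z i j = y j - algebraMap k B (c i j)
  adjoin_eq_top : Algebra.adjoin k (Set.range y ∪ {b | ∃ j i, j ≠ o ∧ b = z i j}) = ⊤

namespace IsInfiniteBlowup

variable {k ι B : Type*} [Field k] [CommRing B] [Algebra k B]
  {c : ℕ → ι → k} {o : ι} {y : ι → B} {z : ℕ → ι → B}

/-- Every element of `B` is moved into a subalgebra `D` containing the coordinates by a product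
of the elements `y o - c i o` for those `i` whose blowup coordinates are not known to lie
in `D`. -/
theorem exists_mul_mem (h : IsInfiniteBlowup c o y z) (D : Subalgebra k B) (hy : ∀ j, y j ∈ D)
    (J : Set ℕ) (hz : ∀ i ∉ J, ∀ j ≠ o, z i j ∈ D) (b : B) :
    ∃ s ∈ Submonoid.closure ((fun i => y o - algebraMap k B (c i o)) '' J), s * b ∈ D := by
  have hb : b ∈ Algebra.adjoin k (Set.range y ∪ {b | ∃ j i, j ≠ o ∧ b = z i j}) := by
    rw [h.adjoin_eq_top]
    trivial
  refine D.exists_mul_mem_of_mem_adjoin _ ?_ ?_ hb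
  · change Submonoid.closure _ ≤ D.toSubmonoid
    rw [Submonoid.closure_le]
    rintro _ ⟨i, -, rfl⟩
    exact D.sub_mem (hy o) (D.algebraMap_mem _)
  · rintro _ (⟨j, rfl⟩ | ⟨j, i, hj, rfl⟩)
    · exact ⟨1, one_mem _, by simpa using hy j⟩
    · by_cases hi : i ∈ J
      · refine ⟨_, Submonoid.subset_closure ⟨i, hi, rfl⟩, ?_⟩
        rw [h.mul_eq i j hj]
        exact D.sub_mem (hy j) (D.algebraMap_mem _)
      · exact ⟨1, one_mem _, by simpa using hz i hi j hj⟩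

/-- The coordinates on the `n`-th chart of the blowup are algebraically independent. -/
theorem algebraicIndependent_update [DecidableEq ι] (h : IsInfiniteBlowup c o y z) (n : ℕ) :
    AlgebraicIndependent k
      (Function.update (z n) o (y o - algebraMap k B (c n o))) := by
  set w := Function.update (z n) o (y o - algebraMap k B (c n o)) with hw
  let φ : MvPolynomial ι k →ₐ[k] MvPolynomial ι k :=
    aeval fun j => if j = o then X o + C (c n o) else X o * X j + C (c n j)
  have hwo : w o = y o - algebraMap k B (c n o) := by simp [hw]
  have hcomp : (aeval w).comp φ = (aeval y : MvPolynomial ι k →ₐ[k] B) := by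
    refine MvPolynomial.algHom_ext fun j => ?_
    by_cases hj : j = o
    · subst hj
      simp [φ, hwo]
    · have hwj : w j = z n j := by simp [hw, hj]
      simp [φ, hj, hwo, hwj, h.mul_eq n j hj]
  have hXo : X o ∈ φ.range := ⟨X o - C (c n o), by simp [φ, ← algebraMap_eq]⟩
  refine (injective_iff_map_eq_zero _).2 fun p hp => ?_
  have hp_adjoin : p ∈ Algebra.adjoin k (Set.range (X : ι → MvPolynomial ι k)) := by
    rw [adjoin_range_X]
    trivial
  obtain ⟨_, ⟨N, rfl⟩, q, hq⟩ := φ.range.exists_mul_mem_of_mem_adjoin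
    (Submonoid.powers (X o)) (by rintro _ ⟨N, rfl⟩; exact pow_mem hXo N)
    (by
      rintro _ ⟨j, rfl⟩
      by_cases hj : j = o
      · exact ⟨1, one_mem _, by rw [one_mul, hj]; exact hXo⟩
      · exact ⟨X o, Submonoid.mem_powers _, X j - C (c n j),
          by simp [φ, hj, ← algebraMap_eq]⟩) hp_adjoin
  have hq0 : q = 0 := by
    refine (injective_iff_map_eq_zero _).1 h.algebraicIndependent q ?_
    rw [← hcomp]
    change aeval w (φ.toRingHom q) = 0
    rw [hq, map_mul, hp, mul_zero]
  rw [hq0, map_zero] at hq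
  exact (mul_eq_zero.1 hq.symm).resolve_left (pow_ne_zero _ (X_ne_zero o))

/-- The exceptional divisors of the blowup are prime. -/
theorem prime_sub [IsDomain B] (h : IsInfiniteBlowup c o y z)
    (hdist : ∀ i j, i ≠ j → c i o ≠ c j o) (n : ℕ) :
    Prime (y o - algebraMap k B (c n o)) := by
  classical
  have hinj := h.algebraicIndependent_update n
  set w := Function.update (z n) o (y o - algebraMap k B (c n o)) with hw
  have hwo : w o = y o - algebraMap k B (c n o) := by simp [hw]
  let ψ : MvPolynomial ι k →ₐ[k] B := aeval w
  replace hinj : Function.Injective ψ := hinj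
  have hψX : ψ (X o) = y o - algebraMap k B (c n o) := by simp [ψ, hwo]
  have hyo : ∀ a, ψ (X o + C (c n o - a)) = y o - algebraMap k B a := fun a => by
    simp [ψ, hwo]
  have hfrac : ∀ b, ∃ p q, IsCoprime (X o) p ∧ ψ p * b = ψ q := fun b => by
    obtain ⟨s, hs, q, hq⟩ := h.exists_mul_mem ψ.range
      (fun j => by
        by_cases hj : j = o
        · subst hj
          exact ⟨_, (hyo 0).trans (by simp)⟩
        · have hwj : w j = z n j := by simp [hw, hj]
          exact ⟨X o * X j + C (c n j), by simp [ψ, hwo, hwj, h.mul_eq n j hj]⟩)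
      {i | i ≠ n}
      (fun i hi j hj => by
        obtain rfl : i = n := by simpa using hi
        exact ⟨X j, by simp [ψ, hw, hj]⟩) b
    obtain ⟨p, hp, rfl⟩ : ∃ p, IsCoprime (X o) p ∧ ψ p = s := by
      clear hq
      induction hs using Submonoid.closure_induction with
      | mem s hs =>
        obtain ⟨i, hi, rfl⟩ := hs
        refine ⟨_, ?_, hyo _⟩
        have hu : IsUnit (C (c n o - c i o) : MvPolynomial ι k) :=
          (IsUnit.mk0 _ (sub_ne_zero.2 (hdist n i (Ne.symm hi)))).map C
        have hc : IsCoprime (X o : MvPolynomial ι k) (C (c n o - c i o)) :=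
          isCoprime_one_right.of_isCoprime_of_dvd_right hu.dvd
        rw [add_comm]
        simpa only [mul_one] using hc.add_mul_left_right 1
      | one => exact ⟨1, isCoprime_one_right, map_one _⟩
      | mul a b _ _ ha hb =>
        obtain ⟨p, hp, rfl⟩ := ha
        obtain ⟨q, hq, rfl⟩ := hb
        exact ⟨p * q, hp.mul_right hq, map_mul _ _ _⟩
    exact ⟨p, q, hp, hq.symm⟩
  have hX : Prime (X o : MvPolynomial ι k) := X_prime
  have hnot : ∀ p : MvPolynomial ι k, IsCoprime (X o) p → ¬ X o ∣ p := fun p hp hdvd =>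
    hX.not_isUnit (hp.isUnit_of_dvd' dvd_rfl hdvd)
  rw [← hψX]
  have hcancel : ∀ p q b, IsCoprime (X o) p → ψ p * b = ψ q → X o ∣ q → ψ (X o) ∣ b := by
    rintro p q b hp hpq hdvd
    exact (hp.map ψ.toRingHom).dvd_of_dvd_mul_left (hpq ▸ map_dvd ψ hdvd : ψ (X o) ∣ ψ p * b)
  refine ⟨(map_ne_zero_iff ψ hinj).2 hX.ne_zero, fun hu => ?_, ?_⟩
  · obtain ⟨b, hb⟩ := hu.exists_right_inv
    obtain ⟨p, q, hp, hpq⟩ := hfrac b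
    refine hnot p hp ⟨q, hinj ?_⟩
    rw [map_mul, ← hpq]
    linear_combination (-ψ p) * hb
  · rintro a b ⟨d, hd⟩
    obtain ⟨p₁, q₁, hp₁, h₁⟩ := hfrac a
    obtain ⟨p₂, q₂, hp₂, h₂⟩ := hfrac b
    obtain ⟨p₃, q₃, hp₃, h₃⟩ := hfrac d
    have hdvd : X o ∣ p₃ * (q₁ * q₂) := by
      refine ⟨p₁ * p₂ * q₃, hinj ?_⟩
      simp only [map_mul, ← h₁, ← h₂, ← h₃]
      linear_combination ψ p₁ * ψ p₂ * ψ p₃ * hd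
    rcases hX.dvd_or_dvd ((hX.dvd_or_dvd hdvd).resolve_left (hnot p₃ hp₃)) with h' | h'
    · exact Or.inl (hcancel p₁ q₁ a hp₁ h₁ h')
    · exact Or.inr (hcancel p₂ q₂ b hp₂ h₂ h')

/-- A polynomial is congruent to its value at `c i` modulo the `i`-th exceptional divisor. -/
theorem sub_dvd_aeval_sub (h : IsInfiniteBlowup c o y z) (i : ℕ) (f : MvPolynomial ι k) :
    y o - algebraMap k B (c i o) ∣ aeval y f - algebraMap k B (eval (c i) f) := by
  induction f using MvPolynomial.induction_on with
  | C a => simp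
  | add p q hp hq =>
    convert dvd_add hp hq using 1
    simp only [map_add]
    ring
  | mul_X p j hp =>
    have hj : y o - algebraMap k B (c i o) ∣ y j - algebraMap k B (c i j) := by
      by_cases hj : j = o
      · rw [hj]
      · exact ⟨z i j, (h.mul_eq i j hj).symm⟩
    convert dvd_add (hp.mul_right (y j)) (hj.mul_left (algebraMap k B (eval (c i) p))) using 1
    simp only [map_mul, aeval_X, eval_X]
    ring

/-- Every element of `B` is a fraction of polynomials in the coordinates, with denominator a
product of equations of exceptional divisors. -/
theorem exists_aeval_eq (h : IsInfiniteBlowup c o y z) (b : B) :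
    ∃ s ∈ Submonoid.closure (Set.range fun i => X o - C (c i o)), ∃ a : MvPolynomial ι k,
      aeval y s * b = aeval y a := by
  obtain ⟨s, hs, a, ha⟩ := h.exists_mul_mem (aeval y : MvPolynomial ι k →ₐ[k] B).range
    (fun j => ⟨X j, by simp⟩) Set.univ (by simp) b
  have himage : (fun i => y o - algebraMap k B (c i o)) '' Set.univ =
      (aeval y : MvPolynomial ι k →ₐ[k] B) '' Set.range fun i => X o - C (c i o) := by
    rw [Set.image_univ, ← Set.range_comp]
    congr 1
    ext i
    simp
  rw [himage, ← MonoidHom.map_mclosure] at hs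
  obtain ⟨s, hs, rfl⟩ := hs
  exact ⟨s, hs, a, ha.symm⟩

theorem isNoetherianRing [Finite ι] [IsDomain B] (h : IsInfiniteBlowup c o y z)
    (hdist : ∀ i j, i ≠ j → c i o ≠ c j o)
    (hcd : ∀ f : MvPolynomial ι k, f ≠ 0 → {i | eval (c i) f = 0}.Finite) :
    IsNoetherianRing B := by
  refine (isNoetherianRing_iff_ideal_fg B).2 fun I => ?_
  by_cases hI : I = ⊥
  · rw [hI]
    exact Submodule.fg_bot
  obtain ⟨f, hf0, hfI⟩ : ∃ f : MvPolynomial ι k, f ≠ 0 ∧ aeval y f ∈ I := by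
    obtain ⟨b, hbI, hb⟩ := Submodule.exists_mem_ne_zero_of_ne_bot hI
    obtain ⟨s, hs, a, ha⟩ := h.exists_aeval_eq b
    refine ⟨a, ?_, ha ▸ I.mul_mem_left _ hbI⟩
    rintro rfl
    have hs0 : aeval y s ≠ 0 := by
      clear ha
      induction hs using Submonoid.closure_induction with
      | mem s hs =>
        obtain ⟨i, rfl⟩ := hs
        simpa using (h.prime_sub hdist i).ne_zero
      | one => simp
      | mul a b _ _ ha hb => simpa using ⟨ha, hb⟩
    exact mul_ne_zero hs0 hb (by simpa using ha)
  set F := {i | eval (c i) f = 0} with hF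
  let G : Set B := Set.range y ∪ (fun p : ℕ × ι => z p.1 p.2) '' (F ×ˢ Set.univ)
  have hG : G.Finite :=
    (Set.finite_range y).union (((hcd f hf0).prod Set.finite_univ).image _)
  let D : Subalgebra k B := Algebra.adjoin k G
  have hyD : ∀ j, y j ∈ D := fun j => Algebra.subset_adjoin (Or.inl ⟨j, rfl⟩)
  have hDft : Algebra.FiniteType k D :=
    D.fg_iff_finiteType.1 ⟨hG.toFinset, by rw [Set.Finite.coe_toFinset]⟩
  have hD : IsNoetherianRing D := Algebra.FiniteType.isNoetherianRing k D
  have hfD : aeval y f ∈ D := by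
    refine Algebra.adjoin_mono Set.subset_union_left ?_
    rw [Algebra.adjoin_range_eq_range_aeval]
    exact ⟨f, rfl⟩
  suffices hmap : (I.comap D.val.toRingHom).map D.val.toRingHom = I by
    rw [← hmap]
    exact ((isNoetherianRing_iff_ideal_fg D).1 hD _).map _
  refine le_antisymm Ideal.map_comap_le fun b hb => ?_
  have hmem : ∀ d ∈ D, d ∈ I → d ∈ (I.comap D.val.toRingHom).map D.val.toRingHom :=
    fun d hd hdI => Ideal.mem_map_of_mem D.val.toRingHom
      (show (⟨d, hd⟩ : D) ∈ I.comap D.val.toRingHom from hdI)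
  obtain ⟨s, hs, hsb⟩ := h.exists_mul_mem D hyD Fᶜ
    (fun i hi j _ => Algebra.subset_adjoin (Or.inr ⟨(i, j), ⟨by simpa using hi, trivial⟩, rfl⟩)) b
  have hcop : IsCoprime s (aeval y f) := by
    clear hsb
    induction hs using Submonoid.closure_induction with
    | mem s hs =>
      obtain ⟨i, hi, rfl⟩ := hs
      obtain ⟨r, hr⟩ := h.sub_dvd_aeval_sub i f
      have hu : algebraMap k B (eval (c i) f)⁻¹ * algebraMap k B (eval (c i) f) = 1 := by
        rw [← map_mul, inv_mul_cancel₀ hi, map_one]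
      exact ⟨-(algebraMap k B (eval (c i) f)⁻¹ * r), algebraMap k B (eval (c i) f)⁻¹, by
        linear_combination hu + algebraMap k B (eval (c i) f)⁻¹ * hr⟩
    | one => exact isCoprime_one_left
    | mul a b _ _ ha hb => exact ha.mul_left hb
  obtain ⟨u, v, huv⟩ := hcop
  have hb_eq : b = u * (s * b) + v * b * aeval y f := by linear_combination (-b) * huv
  rw [hb_eq]
  exact Ideal.add_mem _ (Ideal.mul_mem_left _ _ (hmem _ hsb (I.mul_mem_left _ hb)))
    (Ideal.mul_mem_left _ _ (hmem _ hfD hfI))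

theorem uniqueFactorizationMonoid [IsDomain B] [IsNoetherianRing B]
    (h : IsInfiniteBlowup c o y z) (hdist : ∀ i j, i ≠ j → c i o ≠ c j o) :
    UniqueFactorizationMonoid B := by
  refine .of_nagata (aeval y : MvPolynomial ι k →ₐ[k] B).toRingHom h.algebraicIndependent
    (Set.range fun i => X o - C (c i o)) ?_ h.exists_aeval_eq
  rintro _ ⟨i, rfl⟩
  simpa using h.prime_sub hdist i

end IsInfiniteBlowup

/-- the infinite blowup of `𝔸^t` (`t ≥ 2`) at a critically dense sequence of
points with pairwise distinct first coordinates is a noetherian ring and a UFD. -/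
theorem stmt_4 {k : Type*} [Field k] [IsAlgClosed k]
    (t : ℕ) (ht : 2 ≤ t) (c : ℕ → Fin t → k)
    (hdist : ∀ i j : ℕ, i ≠ j → c i ⟨0, by omega⟩ ≠ c j ⟨0, by omega⟩)
    (hcd : ∀ f : MvPolynomial (Fin t) k, f ≠ 0 →
      {i : ℕ | MvPolynomial.eval (c i) f = 0}.Finite) :
    IsNoetherianRing (Algebra.adjoin k
      ((Set.range fun j : Fin t =>
          algebraMap (MvPolynomial (Fin t) k) (FractionRing (MvPolynomial (Fin t) k))
            (MvPolynomial.X j)) ∪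
       {x : FractionRing (MvPolynomial (Fin t) k) | ∃ (j : Fin t) (i : ℕ),
          j ≠ ⟨0, by omega⟩ ∧
          x = (algebraMap (MvPolynomial (Fin t) k) (FractionRing (MvPolynomial (Fin t) k))
                  (MvPolynomial.X j) -
                algebraMap k (FractionRing (MvPolynomial (Fin t) k)) (c i j)) *
              (algebraMap (MvPolynomial (Fin t) k) (FractionRing (MvPolynomial (Fin t) k))
                  (MvPolynomial.X ⟨0, by omega⟩) -
                algebraMap k (FractionRing (MvPolynomial (Fin t) k))
                  (c i ⟨0, by omega⟩))⁻¹})) ∧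
    UniqueFactorizationMonoid (Algebra.adjoin k
      ((Set.range fun j : Fin t =>
          algebraMap (MvPolynomial (Fin t) k) (FractionRing (MvPolynomial (Fin t) k))
            (MvPolynomial.X j)) ∪
       {x : FractionRing (MvPolynomial (Fin t) k) | ∃ (j : Fin t) (i : ℕ),
          j ≠ ⟨0, by omega⟩ ∧
          x = (algebraMap (MvPolynomial (Fin t) k) (FractionRing (MvPolynomial (Fin t) k))
                  (MvPolynomial.X j) -
                algebraMap k (FractionRing (MvPolynomial (Fin t) k)) (c i j)) *
              (algebraMap (MvPolynomial (Fin t) k) (FractionRing (MvPolynomial (Fin t) k))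
                  (MvPolynomial.X ⟨0, by omega⟩) -
                algebraMap k (FractionRing (MvPolynomial (Fin t) k))
                  (c i ⟨0, by omega⟩))⁻¹})) := by
  classical
  set φ := algebraMap (MvPolynomial (Fin t) k) (FractionRing (MvPolynomial (Fin t) k)) with hφ
  set o : Fin t := ⟨0, by omega⟩ with ho
  have hinj : Function.Injective φ :=
    IsFractionRing.injective (MvPolynomial (Fin t) k) (FractionRing (MvPolynomial (Fin t) k))
  set G := (Set.range fun j : Fin t => φ (X j)) ∪
    {x : FractionRing (MvPolynomial (Fin t) k) | ∃ (j : Fin t) (i : ℕ), j ≠ o ∧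
      x = (φ (X j) - algebraMap k (FractionRing (MvPolynomial (Fin t) k)) (c i j)) *
        (φ (X o) - algebraMap k (FractionRing (MvPolynomial (Fin t) k)) (c i o))⁻¹} with hG
  let y : Fin t → Algebra.adjoin k G := fun j =>
    ⟨φ (X j), Algebra.subset_adjoin (Or.inl ⟨j, rfl⟩)⟩
  let z : ℕ → Fin t → Algebra.adjoin k G := fun i j => if hj : j ≠ o then
    ⟨_, Algebra.subset_adjoin (Or.inr ⟨j, i, hj, rfl⟩)⟩ else 0
  have hz : ∀ i j, j ≠ o → (z i j : FractionRing (MvPolynomial (Fin t) k)) =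
      (φ (X j) - algebraMap k (FractionRing (MvPolynomial (Fin t) k)) (c i j)) *
        (φ (X o) - algebraMap k (FractionRing (MvPolynomial (Fin t) k)) (c i o))⁻¹ :=
    fun i j hj => by simp only [z, dif_pos hj]
  have hC : ∀ a, algebraMap k (FractionRing (MvPolynomial (Fin t) k)) a = φ (C a) := fun a => by
    rw [IsScalarTower.algebraMap_apply k (MvPolynomial (Fin t) k), algebraMap_eq]
  have h : IsInfiniteBlowup c o y z := by
    refine ⟨?_, fun i j hj => Subtype.ext ?_, ?_⟩
    · have hcomp : (Algebra.adjoin k G).val.comp (aeval y) =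
          IsScalarTower.toAlgHom k (MvPolynomial (Fin t) k)
            (FractionRing (MvPolynomial (Fin t) k)) :=
        MvPolynomial.algHom_ext fun j => by simp [y, hφ]
      have hcomp_inj : Function.Injective ((Algebra.adjoin k G).val.comp (aeval y)) := by
        rw [hcomp]
        exact hinj
      rw [AlgHom.coe_comp] at hcomp_inj
      exact hcomp_inj.of_comp
    · have hne : φ (X o) - algebraMap k (FractionRing (MvPolynomial (Fin t) k)) (c i o) ≠ 0 := by
        rw [hC, ← map_sub]
        refine (map_ne_zero_iff φ hinj).2 fun h0 => ?_
        have h1 := congrArg (eval fun _ => c i o + 1) h0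
        simp at h1
      change (φ (X o) - algebraMap k (FractionRing (MvPolynomial (Fin t) k)) (c i o)) *
        (z i j : FractionRing (MvPolynomial (Fin t) k)) =
        φ (X j) - algebraMap k (FractionRing (MvPolynomial (Fin t) k)) (c i j)
      rw [hz i j hj]
      field_simp
    · rw [← Algebra.adjoin_adjoin_coe_preimage (R := k) (s := G)]
      congr 1
      ext b
      constructor
      · rintro (⟨j, rfl⟩ | ⟨j, i, hj, rfl⟩)
        · exact Or.inl ⟨j, rfl⟩
        · exact Or.inr ⟨j, i, hj, hz i j hj⟩
      · rintro (⟨j, hj⟩ | ⟨j, i, hj, hb⟩)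
        · exact Or.inl ⟨j, Subtype.ext hj⟩
        · exact Or.inr ⟨j, i, hj, Subtype.ext (hb.trans (hz i j hj).symm)⟩
  have hnoeth := h.isNoetherianRing hdist hcd
  exact ⟨hnoeth, h.uniqueFactorizationMonoid hdist⟩
end
end
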